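/- arXiv:1203.4301 — 3 statements merged into one kernel-verified Lean document; each statement's English description precedes it below -/
import Mathlib

section
/- Let Σ be a finitely primitive Markov shift over a countable alphabet I, G a countable group, Ψ: I* → G a semigroup homomorphism such that the group-extended Markov system σ⋊Ψ on Σ×G is irreducible, and φ: Σ → ℝ Hölder continuous and asymptotically symmetric with respect to Ψ. Then 2·P(φ, Ψ^{-1}(id) ∩ Σ*) ≥ P(2φ), where P(φ, C) denotes the pressure restricted to the collection C of admissible words and P(2φ) the full pressure of 2φ. -/
namespace Stmt13

open scoped ENNReal

variable {I : Type*} (A : I → I → Prop)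

/-- An admissible (infinite) sequence of the Markov shift. -/
def Adm (τ : ℕ → I) : Prop := ∀ n, A (τ n) (τ (n + 1))

/-- The cylinder set of a finite word inside the Markov shift. -/
def Cyl (l : List I) : Set (ℕ → I) :=
  {τ | Adm A τ ∧ ∀ i, (h : i < l.length) → τ i = l.get ⟨i, h⟩}

/-- Birkhoff (ergodic) sum `S_n f(τ)`. -/
def birk (f : (ℕ → I) → ℝ) (n : ℕ) (τ : ℕ → I) : ℝ :=
  ∑ i ∈ Finset.range n, f fun k => τ (k + i)

/-- `S_ω f := sup_{τ ∈ [ω]} S_{|ω|} f(τ)`. -/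
noncomputable def Sw (f : (ℕ → I) → ℝ) (l : List I) : ℝ :=
  sSup {y | ∃ τ ∈ Cyl A l, y = birk f l.length τ}

/-- The shift is finitely primitive. -/
def FinPrim : Prop :=
  ∃ m : ℕ, ∃ F : Set (List I), F.Finite ∧ (∀ w ∈ F, w.length = m) ∧
    ∀ i j : I, ∃ w ∈ F, (i :: (w ++ [j])).Chain' A

/-- Hölder continuity with respect to some metric `d_α`. -/
def Holder (f : (ℕ → I) → ℝ) : Prop :=
  ∃ α > (0 : ℝ), ∃ V : ℝ, ∀ n : ℕ, 1 ≤ n → ∀ τ τ' : ℕ → I, Adm A τ → Adm A τ' →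
    (∀ i < n, τ i = τ' i) → |f τ - f τ'| ≤ V * Real.exp (-α * n)

variable {G : Type*} [Group G] (ψ₀ : I → G)

/-- The semigroup homomorphism `Ψ : I* → G` induced by `ψ₀`. -/
def Ψ (l : List I) : G := (l.map ψ₀).prod

/-- Irreducibility of the group-extended Markov system `σ ⋊ Ψ`. -/
def IrrExt : Prop :=
  ∀ i j : I, ∀ g : G, ∃ w : List I, (i :: (w ++ [j])).Chain' A ∧ Ψ ψ₀ w = g

/-- Partition function over the words of length `n` in a collection `C`. -/
noncomputable def ZC (f : (ℕ → I) → ℝ) (C : List I → Prop) (n : ℕ) : ℝ≥0∞ :=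
  ∑' l : {l : List I // l.length = n ∧ l.Chain' A ∧ C l},
    ENNReal.ofReal (Real.exp (Sw A f l.val))

/-- The pressure of `f` restricted to the collection `C` of admissible words. -/
noncomputable def pressureC (f : (ℕ → I) → ℝ) (C : List I → Prop) : EReal :=
  Filter.atTop.limsup fun n : ℕ => (((n : ℝ)⁻¹ : ℝ) : EReal) * ENNReal.log (ZC A f C n)

/-- `φ` is asymptotically symmetric with respect to `Ψ`. -/
def AsympSymm (f : (ℕ → I) → ℝ) : Prop :=
  ∃ n₀ : ℕ, ∃ c : ℕ → ℝ, ∃ N : ℕ → ℕ, (∀ n, 0 < c n) ∧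
    Filter.Tendsto (fun n : ℕ => c n ^ ((n : ℝ)⁻¹)) Filter.atTop (nhds 1) ∧
    Filter.Tendsto (fun n : ℕ => (N n : ℝ) / n) Filter.atTop (nhds 0) ∧
    ∀ g : G, ∀ n : ℕ, n₀ ≤ n →
      (∑' l : {l : List I // l.length = n ∧ l.Chain' A ∧ Ψ ψ₀ l = g},
          ENNReal.ofReal (Real.exp (Sw A f l.val))) ≤
        ENNReal.ofReal (c n) *
          ∑' l : {l : List I // l.Chain' A ∧ Ψ ψ₀ l = g⁻¹ ∧
              n - N n ≤ l.length ∧ l.length ≤ n + N n},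
            ENNReal.ofReal (Real.exp (Sw A f l.val))

section Helpers

theorem exists_adm (hs : ∀ i, ∃ j, A i j) (i : I) : ∃ τ, Adm A τ ∧ τ 0 = i := by
  choose nx hnx using hs
  refine ⟨fun k => nx^[k] i, ?_, rfl⟩
  intro n
  simp only [Function.iterate_succ_apply']
  exact hnx _

theorem cyl_nonempty (hs : ∀ i, ∃ j, A i j) (l : List I) (hl : l ≠ []) (hc : l.IsChain A) :
    (Cyl A l).Nonempty := by
  induction l with
  | nil => exact absurd rfl hl
  | cons a l ih =>
    cases l with
    | nil =>
      obtain ⟨τ, h1, h2⟩ := exists_adm A hs a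
      refine ⟨τ, h1, ?_⟩
      intro i h
      have : i = 0 := by simpa using h
      subst this
      simpa using h2
    | cons b l =>
      rw [List.isChain_cons_cons] at hc
      obtain ⟨τ, h1, h2⟩ := ih (by simp) hc.2
      refine ⟨fun k => Nat.casesOn k a τ, ?_, ?_⟩
      · intro n
        cases n with
        | zero =>
          have := h2 0 (by simp)
          simp only [List.get_eq_getElem, List.getElem_cons_zero] at this
          show A a (τ 0)
          rw [this]; exact hc.1
        | succ n => exact h1 n
      · intro i h
        cases i with
        | zero => rfl
        | succ n => exact h2 n (by simpa using h)

theorem distortion (f : (ℕ → I) → ℝ) (hf : Holder A f) :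
    ∃ D : ℝ, ∀ l, ∀ τ ∈ Cyl A l, ∀ τ' ∈ Cyl A l,
      birk f l.length τ ≤ birk f l.length τ' + D := by
  obtain ⟨α, hα, V, hV⟩ := hf
  set r := Real.exp (-α) with hr
  have hr0 : 0 < r := Real.exp_pos _
  have hr1 : r < 1 := by rw [hr]; simpa using hα
  refine ⟨|V| * ∑' k : ℕ, r ^ k, ?_⟩
  intro l τ hτ τ' hτ'
  have key : ∀ i ∈ Finset.range l.length,
      f (fun k => τ (k + i)) - f (fun k => τ' (k + i)) ≤ |V| * r ^ (l.length - 1 - i) := by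
    intro i hi
    have hi : i < l.length := by simpa using hi
    have h1 := hV (l.length - i) (by omega) (fun k => τ (k + i)) (fun k => τ' (k + i))
      (fun n => by have := hτ.1 (n + i); simpa [add_right_comm] using this)
      (fun n => by have := hτ'.1 (n + i); simpa [add_right_comm] using this)
      (fun k hk => by
        show τ (k + i) = τ' (k + i)
        rw [hτ.2 (k + i) (by omega), hτ'.2 (k + i) (by omega)])
    refine (le_abs_self _).trans (h1.trans ?_)
    have h2 : Real.exp (-α * ((l.length - i : ℕ) : ℝ)) = r ^ (l.length - i) := by
      rw [hr, ← Real.exp_nat_mul, mul_comm]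
    rw [h2]
    calc V * r ^ (l.length - i) ≤ |V| * r ^ (l.length - i) := by
          gcongr; exact le_abs_self V
      _ ≤ |V| * r ^ (l.length - 1 - i) := by
          refine mul_le_mul_of_nonneg_left ?_ (abs_nonneg V)
          exact pow_le_pow_of_le_one hr0.le hr1.le (by omega)
  have h3 := Finset.sum_le_sum key
  rw [← Finset.mul_sum, Finset.sum_range_reflect (fun k => r ^ k), Finset.sum_sub_distrib] at h3
  have h4 : ∑ k ∈ Finset.range l.length, r ^ k ≤ ∑' k : ℕ, r ^ k :=
    (summable_geometric_of_lt_one hr0.le hr1).sum_le_tsum _ (fun _ _ => by positivity)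
  have h5 := mul_le_mul_of_nonneg_left h4 (abs_nonneg V)
  unfold birk
  linarith

theorem birk_le_Sw (f : (ℕ → I) → ℝ) {D : ℝ} (hD : ∀ l, ∀ τ ∈ Cyl A l, ∀ τ' ∈ Cyl A l,
      birk f l.length τ ≤ birk f l.length τ' + D) (l : List I) (τ) (hτ : τ ∈ Cyl A l) :
    birk f l.length τ ≤ Sw A f l := by
  apply le_csSup
  · refine ⟨birk f l.length τ + D, ?_⟩
    rintro y ⟨τ', h', rfl⟩
    exact hD l τ' h' τ hτ
  · exact ⟨τ, hτ, rfl⟩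

theorem Sw_le_birk (f : (ℕ → I) → ℝ) {D : ℝ} (hD : ∀ l, ∀ τ ∈ Cyl A l, ∀ τ' ∈ Cyl A l,
      birk f l.length τ ≤ birk f l.length τ' + D) (l : List I) (τ) (hτ : τ ∈ Cyl A l) :
    Sw A f l ≤ birk f l.length τ + D := by
  apply csSup_le
  · exact ⟨_, τ, hτ, rfl⟩
  · rintro y ⟨τ', h', rfl⟩
    exact hD l τ' h' τ hτ

theorem Sw_two (f : (ℕ → I) → ℝ) {D : ℝ} (hD : ∀ l, ∀ τ ∈ Cyl A l, ∀ τ' ∈ Cyl A l,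
      birk f l.length τ ≤ birk f l.length τ' + D) (l : List I) (hl : (Cyl A l).Nonempty) :
    Sw A (fun τ => 2 * f τ) l ≤ 2 * Sw A f l := by
  obtain ⟨τ, hτ⟩ := hl
  apply csSup_le
  · exact ⟨_, τ, hτ, rfl⟩
  · rintro y ⟨τ', h', rfl⟩
    have := birk_le_Sw A f hD l τ' h'
    unfold birk at *
    rw [← Finset.mul_sum]
    linarith

theorem birk_add (f : (ℕ → I) → ℝ) (a b : ℕ) (τ : ℕ → I) :
    birk f (a + b) τ = birk f a τ + birk f b (fun k => τ (k + a)) := by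
  unfold birk
  rw [Finset.sum_range_add]
  simp only [add_assoc, add_comm a]

theorem cyl_append {l l' : List I} {τ : ℕ → I} (h : τ ∈ Cyl A (l ++ l')) :
    τ ∈ Cyl A l ∧ (fun k => τ (k + l.length)) ∈ Cyl A l' := by
  refine ⟨⟨h.1, fun i hi => ?_⟩, fun n => ?_, fun i hi => ?_⟩
  · rw [h.2 i (by simp; omega)]
    simp [List.getElem_append_left hi]
  · have := h.1 (n + l.length)
    simpa [add_right_comm] using this
  · show τ (i + l.length) = _
    rw [h.2 (i + l.length) (by simp; omega)]
    simp [List.getElem_append_right]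

theorem Sw_append (f : (ℕ → I) → ℝ) {D : ℝ} (hD : ∀ l, ∀ τ ∈ Cyl A l, ∀ τ' ∈ Cyl A l,
      birk f l.length τ ≤ birk f l.length τ' + D) (l l' : List I)
      (hl : (Cyl A (l ++ l')).Nonempty) :
    Sw A f l + Sw A f l' ≤ Sw A f (l ++ l') + 2 * D := by
  obtain ⟨τ, hτ⟩ := hl
  have h1 := birk_le_Sw A f hD _ τ hτ
  rw [List.length_append, birk_add] at h1
  obtain ⟨h2, h3⟩ := cyl_append A hτ
  have h4 := Sw_le_birk A f hD _ _ h2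
  have h5 := Sw_le_birk A f hD _ _ h3
  linarith

theorem finPrim_succ (hprim : FinPrim A) (i : I) : ∃ j, A i j := by
  obtain ⟨m, F, hF, -, h⟩ := hprim
  obtain ⟨w, -, hw⟩ := h i i
  cases w with
  | nil =>
    have : [i, i].IsChain A := hw
    exact ⟨i, by simpa using this⟩
  | cons a w =>
    have : (i :: a :: (w ++ [i])).IsChain A := hw
    exact ⟨a, (List.isChain_cons_cons.1 this).1⟩

theorem connectors (hprim : FinPrim A) (hirr : IrrExt A ψ₀) :
    ∃ U : Set (List I), U.Finite ∧ (∀ u ∈ U, Ψ ψ₀ u = 1) ∧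
      ∀ i j, ∃ u ∈ U, (i :: (u ++ [j])).IsChain A := by
  rcases isEmpty_or_nonempty I with hI | ⟨⟨i0⟩⟩
  · exact ⟨∅, Set.finite_empty, by simp, fun i => hI.elim i⟩
  obtain ⟨m, F, hF, -, h⟩ := hprim
  choose v hv hvΨ using hirr
  let S1 : Set I := (fun w : List I => (w ++ [i0]).head (by simp)) '' F
  let S2 : Set I := (fun w : List I => (i0 :: w).getLast (by simp)) '' F
  have h1 : ∀ i, ∃ a ∈ S1, A i a := by
    intro i
    obtain ⟨w, hw, hc⟩ := h i i0
    refine ⟨_, ⟨w, hw, rfl⟩, ?_⟩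
    have hc : (i :: (w ++ [i0])).IsChain A := hc
    cases w with
    | nil => simpa using hc
    | cons a w => exact (List.isChain_cons_cons.1 hc).1
  have h2 : ∀ j, ∃ b ∈ S2, A b j := by
    intro j
    obtain ⟨w, hw, hc⟩ := h i0 j
    refine ⟨_, ⟨w, hw, rfl⟩, ?_⟩
    have hc : ((i0 :: w) ++ [j]).IsChain A := hc
    rw [List.isChain_append] at hc
    exact hc.2.2 _ (List.getLast_mem_getLast? (by simp)) _ (by simp)
  refine ⟨Set.image2 (fun a b => a :: (v a b ((ψ₀ a)⁻¹ * (ψ₀ b)⁻¹) ++ [b])) S1 S2,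
    (hF.image _).image2 _ (hF.image _), ?_, ?_⟩
  · rintro _ ⟨a, -, b, -, rfl⟩
    have := hvΨ a b ((ψ₀ a)⁻¹ * (ψ₀ b)⁻¹)
    unfold Ψ at *
    simp [this]
  · intro i j
    obtain ⟨a, ha, hia⟩ := h1 i
    obtain ⟨b, hb, hbj⟩ := h2 j
    refine ⟨_, ⟨a, ha, b, hb, rfl⟩, ?_⟩
    have := hv a b ((ψ₀ a)⁻¹ * (ψ₀ b)⁻¹)
    have this : (a :: (v a b ((ψ₀ a)⁻¹ * (ψ₀ b)⁻¹) ++ [b])).IsChain A := this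
    show (i :: a :: _).IsChain A
    rw [List.isChain_cons_cons]
    refine ⟨hia, ?_⟩
    show ((a :: (v a b ((ψ₀ a)⁻¹ * (ψ₀ b)⁻¹) ++ [b])) ++ [j]).IsChain A
    rw [List.isChain_append]
    refine ⟨this, by simp, ?_⟩
    intro x hx y hy
    have hx : b = x := by
      rw [← List.cons_append, List.getLast?_concat] at hx
      simpa using hx
    have hy : j = y := by simpa using hy
    rw [← hx, ← hy]; exact hbj

/-- Gluing two nonempty admissible words through a connector. -/
theorem glue {U : Set (List I)} (hU : ∀ i j, ∃ u ∈ U, (i :: (u ++ [j])).IsChain A)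
    (l l' : List I) (hl : l ≠ []) (hl' : l' ≠ []) (hc : l.IsChain A) (hc' : l'.IsChain A) :
    ∃ u ∈ U, (l ++ (u ++ l')).IsChain A := by
  obtain ⟨u, hu, h⟩ := hU (l.getLast hl) (l'.head hl')
  refine ⟨u, hu, ?_⟩
  obtain ⟨b, t, rfl⟩ := List.exists_cons_of_ne_nil hl'
  rw [List.isChain_cons] at h
  obtain ⟨h1, h2⟩ := h
  rw [List.isChain_append] at h2
  rw [List.isChain_append, List.isChain_append]
  refine ⟨hc, ⟨h2.1, hc', ?_⟩, ?_⟩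
  · simpa using h2.2.2
  · intro x hx y hy
    rw [List.getLast?_eq_some_getLast hl] at hx
    have hx : l.getLast hl = x := by simpa using hx
    rw [← hx]
    apply h1
    cases u <;> simpa using hy

theorem count (hprim : FinPrim A) (hirr : IrrExt A ψ₀) (φ : (ℕ → I) → ℝ) (hφ : Holder A φ) :
    ∃ C : ℝ, ∃ L K : ℕ, ∀ n N : ℕ, N < n → ∀ c : ℝ≥0∞,
      (∀ g : G, (∑' l : {l : List I // l.length = n ∧ l.IsChain A ∧ Ψ ψ₀ l = g},
          ENNReal.ofReal (Real.exp (Sw A φ l.val))) ≤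
        c * ∑' l : {l : List I // l.IsChain A ∧ Ψ ψ₀ l = g⁻¹ ∧
              n - N ≤ l.length ∧ l.length ≤ n + N},
            ENNReal.ofReal (Real.exp (Sw A φ l.val))) →
      ZC A (fun τ => 2 * φ τ) (fun _ => True) n ≤
        c * (ENNReal.ofReal (Real.exp C) *
          (K * ∑ m ∈ Finset.Icc (n + (n - N)) (n + (n + N) + L),
            ZC A φ (fun l => Ψ ψ₀ l = 1) m)) := by
  classical
  obtain ⟨D, hD⟩ := distortion A φ hφ
  obtain ⟨U, hUf, hU1, hU⟩ := connectors A ψ₀ hprim hirr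
  have hs := finPrim_succ A hprim
  obtain ⟨L, hL⟩ : ∃ L, ∀ u ∈ U, u.length ≤ L := by
    obtain ⟨L, hL⟩ := (hUf.image List.length).bddAbove
    exact ⟨L, fun u hu => hL ⟨u, hu, rfl⟩⟩
  obtain ⟨B, hB⟩ : ∃ B, ∀ u ∈ U, B ≤ Sw A φ u := by
    obtain ⟨B, hB⟩ := (hUf.image (Sw A φ)).bddBelow
    exact ⟨B, fun u hu => hB ⟨u, hu, rfl⟩⟩
  have : Fintype U := hUf.fintype
  refine ⟨4 * D - B, L, Fintype.card U, ?_⟩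
  intro n N hN c hsym
  let w : List I → ℝ≥0∞ := fun l => ENNReal.ofReal (Real.exp (Sw A φ l))
  let X := {l : List I // l.length = n ∧ l.IsChain A ∧ True}
  let Y : X → Type _ := fun x => {l : List I // l.IsChain A ∧ Ψ ψ₀ l = (Ψ ψ₀ x.1)⁻¹ ∧
              n - N ≤ l.length ∧ l.length ≤ n + N}
  let R := fun m : ℕ => {l : List I // l.length = m ∧ l.IsChain A ∧ Ψ ψ₀ l = 1}
  have hne : ∀ x : X, x.1 ≠ [] := by
    rintro ⟨l, h, -⟩ rfl
    simp at h; omega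
  have hne' : ∀ (x : X) (y : Y x), y.1 ≠ [] := by
    rintro x ⟨l, -, -, h, -⟩ rfl
    simp at h; omega
  have step1 : ∀ x : X, ENNReal.ofReal (Real.exp (Sw A (fun τ => 2 * φ τ) x.1)) ≤
      c * ∑' y : Y x, w x.1 * w y.1 := by
    intro x
    have hcyl := cyl_nonempty A hs x.1 (hne x) x.2.2.1
    have h1 : ENNReal.ofReal (Real.exp (Sw A (fun τ => 2 * φ τ) x.1)) ≤ w x.1 * w x.1 := by
      show _ ≤ ENNReal.ofReal _ * ENNReal.ofReal _
      rw [← ENNReal.ofReal_mul (Real.exp_pos _).le, ← Real.exp_add]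
      apply ENNReal.ofReal_le_ofReal
      apply Real.exp_le_exp.2
      have := Sw_two A φ hD x.1 hcyl
      linarith
    have h2 : w x.1 ≤ c * ∑' y : Y x, w y.1 := by
      refine le_trans ?_ (hsym (Ψ ψ₀ x.1))
      exact ENNReal.le_tsum
        (f := fun l : {l : List I // l.length = n ∧ l.IsChain A ∧ Ψ ψ₀ l = Ψ ψ₀ x.1} => w l.1)
        ⟨x.1, x.2.1, x.2.2.1, rfl⟩
    calc _ ≤ w x.1 * w x.1 := h1
      _ ≤ w x.1 * (c * ∑' y : Y x, w y.1) := by gcongr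
      _ = c * ∑' y : Y x, w x.1 * w y.1 := by
        rw [ENNReal.tsum_mul_left]; ring
  have hu : ∀ s : (Σ x : X, Y x), ∃ u ∈ U, (s.1.1 ++ (u ++ s.2.1)).IsChain A := fun s =>
    glue A hU s.1.1 s.2.1 (hne _) (hne' _ _) s.1.2.2.1 s.2.2.1
  choose u huU huc using hu
  let T := U × (Σ m : Finset.Icc (n + (n - N)) (n + (n + N) + L), R m.1)
  have hmem : ∀ s : (Σ x : X, Y x), (s.1.1 ++ (u s ++ s.2.1)).length ∈
      Finset.Icc (n + (n - N)) (n + (n + N) + L) := by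
    rintro ⟨x, y⟩
    have h1 := x.2.1
    have h2 := y.2.2.2.1
    have h3 := y.2.2.2.2
    have h4 := hL _ (huU ⟨x, y⟩)
    simp only [List.length_append, Finset.mem_Icc]
    constructor <;> omega
  let Fm : (Σ x : X, Y x) → T := fun s =>
    (⟨u s, huU s⟩, ⟨⟨_, hmem s⟩, ⟨s.1.1 ++ (u s ++ s.2.1), rfl, huc s, by
      have h1 := hU1 _ (huU s)
      have h2 := s.2.2.2.1
      unfold Ψ at *
      simp only [List.map_append, List.prod_append, h1, h2]
      simp⟩⟩)
  have hinj : Function.Injective Fm := by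
    intro s t he
    have e1 : u s = u t := congrArg (fun q : T => q.1.1) he
    have e2 : s.1.1 ++ (u s ++ s.2.1) = t.1.1 ++ (u t ++ t.2.1) :=
      congrArg (fun q : T => q.2.2.1) he
    have e3 := List.append_inj e2 (s.1.2.1.trans t.1.2.1.symm)
    rw [e1] at e3
    have e4 := List.append_cancel_left e3.2
    have e5 := e3.1
    clear he e1 e2 e3
    obtain ⟨⟨a, ha⟩, ⟨b, hb⟩⟩ := s
    obtain ⟨⟨a', ha'⟩, ⟨b', hb'⟩⟩ := t
    simp only at e4 e5
    subst e4 e5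
    rfl
  have step2 : ∀ s : (Σ x : X, Y x), w s.1.1 * w s.2.1 ≤
      ENNReal.ofReal (Real.exp (4 * D - B)) * w (Fm s).2.2.1 := by
    intro s
    show ENNReal.ofReal _ * ENNReal.ofReal _ ≤ _ * ENNReal.ofReal _
    rw [← ENNReal.ofReal_mul (Real.exp_pos _).le, ← ENNReal.ofReal_mul (Real.exp_pos _).le,
      ← Real.exp_add, ← Real.exp_add]
    apply ENNReal.ofReal_le_ofReal
    apply Real.exp_le_exp.2
    have hc1 : (Cyl A (s.1.1 ++ (u s ++ s.2.1))).Nonempty :=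
      cyl_nonempty A hs _ (by simp [hne s.1]) (huc s)
    have hc2 : (Cyl A (u s ++ s.2.1)).Nonempty := by
      obtain ⟨τ, hτ⟩ := hc1
      exact ⟨_, (cyl_append A hτ).2⟩
    have h1 := Sw_append A φ hD _ _ hc1
    have h2 := Sw_append A φ hD _ _ hc2
    have h3 := hB _ (huU s)
    show _ ≤ 4 * D - B + Sw A φ (s.1.1 ++ (u s ++ s.2.1))
    linarith
  calc ZC A (fun τ => 2 * φ τ) (fun _ => True) n
      ≤ ∑' x : X, c * ∑' y : Y x, w x.1 * w y.1 := ENNReal.tsum_le_tsum step1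
    _ = c * ∑' s : (Σ x : X, Y x), w s.1.1 * w s.2.1 := by
        rw [ENNReal.tsum_mul_left, ENNReal.tsum_sigma']
    _ ≤ c * ∑' s : (Σ x : X, Y x),
        ENNReal.ofReal (Real.exp (4 * D - B)) * w (Fm s).2.2.1 := by
        exact mul_le_mul_right (ENNReal.tsum_le_tsum step2) c
    _ = c * (ENNReal.ofReal (Real.exp (4 * D - B)) * ∑' s : (Σ x : X, Y x), w (Fm s).2.2.1) := by
        rw [ENNReal.tsum_mul_left]
    _ ≤ c * (ENNReal.ofReal (Real.exp (4 * D - B)) * ∑' t : T, w t.2.2.1) := by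
        gcongr
        exact ENNReal.tsum_comp_le_tsum_of_injective hinj (fun t : T => w t.2.2.1)
    _ = _ := by
        congr 2
        rw [ENNReal.tsum_prod', tsum_fintype]
        dsimp only
        rw [Finset.sum_const, Finset.card_univ, nsmul_eq_mul]
        congr 1
        rw [ENNReal.tsum_sigma', tsum_fintype]
        exact Finset.sum_coe_sort (Finset.Icc (n + (n - N)) (n + (n + N) + L))
          (fun m => ZC A φ (fun l => Ψ ψ₀ l = 1) m)

theorem le_of_log {n : ℕ} (hn : 0 < n) {Z : ℝ≥0∞} {p : ℝ}
    (h : (((n : ℝ)⁻¹ : ℝ) : EReal) * ENNReal.log Z < p) :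
    Z ≤ ENNReal.ofReal (Real.exp (n * p)) := by
  have hn' : (0 : ℝ) < n := by exact_mod_cast hn
  rw [← ENNReal.log_le_log_iff, ENNReal.log_ofReal_of_pos (Real.exp_pos _), Real.log_exp]
  induction hZ : ENNReal.log Z using EReal.rec with
  | bot => exact bot_le
  | top =>
    rw [hZ, EReal.coe_mul_top_of_pos (inv_pos.2 hn')] at h
    exact absurd h (by simp)
  | coe r =>
    rw [hZ, ← EReal.coe_mul, EReal.coe_lt_coe_iff] at h
    rw [EReal.coe_le_coe_iff]
    rw [inv_mul_lt_iff₀ hn'] at h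
    exact h.le

theorem log_le_of {n : ℕ} {Z : ℝ≥0∞} {E : ℝ}
    (h : Z ≤ ENNReal.ofReal (Real.exp E)) :
    (((n : ℝ)⁻¹ : ℝ) : EReal) * ENNReal.log Z ≤ ((E / n : ℝ) : EReal) := by
  rw [← ENNReal.log_le_log_iff, ENNReal.log_ofReal_of_pos (Real.exp_pos _), Real.log_exp] at h
  calc _ ≤ (((n : ℝ)⁻¹ : ℝ) : EReal) * (E : EReal) :=
        mul_le_mul_of_nonneg_left h (by exact_mod_cast (by positivity : (0 : ℝ) ≤ (n : ℝ)⁻¹))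
    _ = _ := by rw [← EReal.coe_mul]; congr 1; ring

/-- The elementary estimate at one `n`. -/
theorem estimate (n N L K : ℕ) (hN : N < n) (C p c : ℝ) (hc : 0 < c) (Z : ℕ → ℝ≥0∞)
    (hZ : ∀ m ≥ n, Z m ≤ ENNReal.ofReal (Real.exp (m * p))) :
    ENNReal.ofReal c * (ENNReal.ofReal (Real.exp C) *
          (K * ∑ m ∈ Finset.Icc (n + (n - N)) (n + (n + N) + L), Z m)) ≤
      ENNReal.ofReal (Real.exp
        (Real.log c + C + K + (2 * N + L) + (2 * n * p + |p| * (N + L)))) := by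
  have h1 : ∀ m ∈ Finset.Icc (n + (n - N)) (n + (n + N) + L),
      Z m ≤ ENNReal.ofReal (Real.exp (2 * n * p + |p| * (N + L))) := by
    intro m hm
    rw [Finset.mem_Icc] at hm
    refine (hZ m (by omega)).trans (ENNReal.ofReal_le_ofReal (Real.exp_le_exp.2 ?_))
    have ha : (m : ℝ) ≤ 2 * n + N + L := by
      have : m ≤ 2 * n + N + L := by omega
      exact_mod_cast this
    have hb : (2 * n : ℝ) ≤ m + N := by
      have : 2 * n ≤ m + N := by omega
      exact_mod_cast this
    have hL : (0 : ℝ) ≤ L := by positivity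
    have hd : |(m : ℝ) - 2 * n| ≤ N + L := by
      rw [abs_le]; constructor <;> linarith
    have he : ((m : ℝ) - 2 * n) * p ≤ |p| * (N + L) := by
      calc ((m : ℝ) - 2 * n) * p ≤ |((m : ℝ) - 2 * n) * p| := le_abs_self _
        _ = |p| * |(m : ℝ) - 2 * n| := by rw [abs_mul, mul_comm]
        _ ≤ _ := by gcongr
    linarith
  have h2 := Finset.sum_le_card_nsmul _ _ _ h1
  have h3 : ((Finset.Icc (n + (n - N)) (n + (n + N) + L)).card : ℝ≥0∞) ≤
      ENNReal.ofReal (Real.exp (2 * N + L)) := by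
    rw [← ENNReal.ofReal_natCast]
    apply ENNReal.ofReal_le_ofReal
    have : (Finset.Icc (n + (n - N)) (n + (n + N) + L)).card ≤ 2 * N + L + 1 := by
      rw [Nat.card_Icc]; omega
    have h : ((Finset.Icc (n + (n - N)) (n + (n + N) + L)).card : ℝ) ≤ 2 * N + L + 1 := by
      exact_mod_cast this
    exact h.trans (Real.add_one_le_exp _)
  have h4 : (K : ℝ≥0∞) ≤ ENNReal.ofReal (Real.exp K) := by
    rw [← ENNReal.ofReal_natCast]
    apply ENNReal.ofReal_le_ofReal
    have := Real.add_one_le_exp (K : ℝ)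
    linarith
  rw [nsmul_eq_mul] at h2
  calc _ ≤ ENNReal.ofReal (Real.exp (Real.log c)) * (ENNReal.ofReal (Real.exp C) *
          (ENNReal.ofReal (Real.exp K) * (ENNReal.ofReal (Real.exp (2 * N + L)) *
            ENNReal.ofReal (Real.exp (2 * n * p + |p| * (N + L)))))) := by
        rw [Real.exp_log hc]
        gcongr
        exact h2.trans (by gcongr)
    _ = _ := by
        simp only [Real.exp_add _ (2 * (n : ℝ) * p + |p| * (N + L)),
          Real.exp_add _ (2 * (N : ℝ) + L), Real.exp_add _ (K : ℝ), Real.exp_add _ C]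
        rw [ENNReal.ofReal_mul (by positivity), ENNReal.ofReal_mul (by positivity),
          ENNReal.ofReal_mul (by positivity), ENNReal.ofReal_mul (by positivity)]
        ring

theorem error_tendsto (c : ℕ → ℝ) (N : ℕ → ℕ) (L K : ℕ) (C p : ℝ) (hc : ∀ n, 0 < c n)
    (hc1 : Filter.Tendsto (fun n : ℕ => c n ^ ((n : ℝ)⁻¹)) Filter.atTop (nhds 1))
    (hN : Filter.Tendsto (fun n : ℕ => (N n : ℝ) / n) Filter.atTop (nhds 0)) :
    Filter.Tendsto (fun n : ℕ => (Real.log (c n) + C + K + (2 * N n + L) +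
      (2 * n * p + |p| * (N n + L))) / n) Filter.atTop (nhds (2 * p)) := by
  have h1 : Filter.Tendsto (fun n : ℕ => Real.log (c n) / n) Filter.atTop (nhds 0) := by
    have := (Real.continuousAt_log one_ne_zero).tendsto.comp hc1
    rw [Real.log_one] at this
    refine this.congr fun n => ?_
    simp only [Function.comp]
    rw [Real.log_rpow (hc n)]; ring
  have h2 := tendsto_const_div_atTop_nhds_zero_nat (C + K + L + |p| * L)
  have h3 := ((h1.add h2).add (hN.const_mul (2 + |p|))).add_const (2 * p)
  simp only [add_zero, mul_zero, zero_add] at h3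
  refine h3.congr' ?_
  filter_upwards [Filter.eventually_gt_atTop 0] with n hn
  have : (n : ℝ) ≠ 0 := by positivity
  field_simp
  ring

end Helpers

/- STATEMENT 13: For a finitely primitive shift, an irreducible group extension, and a
Hölder continuous asymptotically symmetric `φ`, we have
2·P(φ, Ψ⁻¹(id) ∩ Σ*) ≥ P(2φ). -/
theorem stmt13 [Countable I] [Countable G] (hprim : FinPrim A) (hirr : IrrExt A ψ₀)
    (φ : (ℕ → I) → ℝ) (hφ : Holder A φ) (hsym : AsympSymm A ψ₀ φ) :
    pressureC A (fun τ => 2 * φ τ) (fun _ => True) ≤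
      (2 : EReal) * pressureC A φ (fun l => Ψ ψ₀ l = 1) := by
  obtain ⟨n₀, c, N, hc, hc1, hN, hs⟩ := hsym
  obtain ⟨C, L, K, hcount⟩ := count A ψ₀ hprim hirr φ hφ
  rw [← EReal.le_of_forall_lt_iff_le]
  intro z hz
  have hP : pressureC A φ (fun l => Ψ ψ₀ l = 1) < ((z / 2 : ℝ) : EReal) := by
    by_contra hcon
    rw [not_lt] at hcon
    have h1 : (2 : EReal) * ((z / 2 : ℝ) : EReal) ≤
        2 * pressureC A φ (fun l => Ψ ψ₀ l = 1) :=
      mul_le_mul_of_nonneg_left hcon (by norm_num)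
    have h2 : (2 : EReal) * ((z / 2 : ℝ) : EReal) = (z : EReal) := by
      have : (2 : EReal) = ((2 : ℝ) : EReal) := rfl
      rw [this, ← EReal.coe_mul]
      congr 1
      ring
    rw [h2] at h1
    exact absurd hz (not_lt.2 h1)
  set p := z / 2 with hp
  have hev := Filter.eventually_lt_of_limsup_lt hP
  obtain ⟨M, hM⟩ := Filter.eventually_atTop.1 hev
  have hlim := error_tendsto c N L K C p hc hc1 hN
  have hz2 : 2 * p = z := by rw [hp]; ring
  rw [hz2] at hlim
  have hlimE := (continuous_coe_real_ereal.tendsto z).comp hlim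
  rw [← hlimE.limsup_eq]
  refine Filter.limsup_le_limsup ?_
  filter_upwards [Filter.eventually_ge_atTop M, Filter.eventually_ge_atTop n₀,
    Filter.eventually_gt_atTop 0, hN.eventually_lt_const one_pos] with n hnM hn0 hn hNn
  have hn' : (0 : ℝ) < n := by exact_mod_cast hn
  have hNn' : N n < n := by
    rw [div_lt_one hn'] at hNn
    exact_mod_cast hNn
  apply log_le_of
  refine (hcount n (N n) hNn' (ENNReal.ofReal (c n)) (fun g => hs g n hn0)).trans ?_
  apply estimate n (N n) L K hNn' C p (c n) (hc n)
  intro m hm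
  exact le_of_log (by omega) (hM m (by omega))

end Stmt13
end

section
/- Let Σ be a finitely primitive Markov shift over a countable alphabet with the big images and preimages structure, (Σ×G, σ⋊Ψ) an irreducible group-extended Markov system, and φ: Σ → ℝ Hölder continuous. Suppose φ is symmetric with respect to Ψ, P(2φ) = 0, P(φ, Ψ^{-1}(id)∩Σ*) = 0, and there exists a σ-invariant Gibbs measure μ for 2φ. Then Σ_{n∈ℕ} Σ_{ω ∈ Σⁿ ∩ Ψ^{-1}(id)} e^{S_ω φ} = ∞, i.e. φ∘π₁ is recurrent. -/
namespace Stmt16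

open scoped ENNReal

variable {I : Type*} (A : I → I → Prop)

/-- An admissible (infinite) sequence of the Markov shift. -/
def Adm (τ : ℕ → I) : Prop := ∀ n, A (τ n) (τ (n + 1))

/-- The cylinder set of a finite word inside the Markov shift. -/
def Cyl (l : List I) : Set (ℕ → I) :=
  {τ | Adm A τ ∧ ∀ i, (h : i < l.length) → τ i = l.get ⟨i, h⟩}

/-- Birkhoff (ergodic) sum `S_n f(τ)`. -/
def birk (f : (ℕ → I) → ℝ) (n : ℕ) (τ : ℕ → I) : ℝ :=
  ∑ i ∈ Finset.range n, f fun k => τ (k + i)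

/-- `S_ω f := sup_{τ ∈ [ω]} S_{|ω|} f(τ)`. -/
noncomputable def Sw (f : (ℕ → I) → ℝ) (l : List I) : ℝ :=
  sSup {y | ∃ τ ∈ Cyl A l, y = birk f l.length τ}

/-- The shift is finitely primitive. -/
def FinPrim : Prop :=
  ∃ m : ℕ, ∃ F : Set (List I), F.Finite ∧ (∀ w ∈ F, w.length = m) ∧
    ∀ i j : I, ∃ w ∈ F, (i :: (w ++ [j])).Chain' A

/-- Hölder continuity with respect to some metric `d_α`. -/
def Holder (f : (ℕ → I) → ℝ) : Prop :=
  ∃ α > (0 : ℝ), ∃ V : ℝ, ∀ n : ℕ, 1 ≤ n → ∀ τ τ' : ℕ → I, Adm A τ → Adm A τ' →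
    (∀ i < n, τ i = τ' i) → |f τ - f τ'| ≤ V * Real.exp (-α * n)

variable {G : Type*} [Group G] (ψ₀ : I → G)

/-- The semigroup homomorphism `Ψ : I* → G` induced by `ψ₀`. -/
def Ψ (l : List I) : G := (l.map ψ₀).prod

/-- Irreducibility of the group-extended Markov system `σ ⋊ Ψ`. -/
def IrrExt : Prop :=
  ∀ i j : I, ∀ g : G, ∃ w : List I, (i :: (w ++ [j])).Chain' A ∧ Ψ ψ₀ w = g

/-- Partition function over the words of length `n` in a collection `C`. -/
noncomputable def ZC (f : (ℕ → I) → ℝ) (C : List I → Prop) (n : ℕ) : ℝ≥0∞ :=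
  ∑' l : {l : List I // l.length = n ∧ l.Chain' A ∧ C l},
    ENNReal.ofReal (Real.exp (Sw A f l.val))

/-- The pressure of `f` restricted to the collection `C` of admissible words. -/
noncomputable def pressureC (f : (ℕ → I) → ℝ) (C : List I → Prop) : EReal :=
  Filter.atTop.limsup fun n : ℕ => (((n : ℝ)⁻¹ : ℝ) : EReal) * ENNReal.log (ZC A f C n)

/-- `φ` is asymptotically symmetric with respect to `Ψ`. -/
def AsympSymm (f : (ℕ → I) → ℝ) : Prop :=
  ∃ n₀ : ℕ, ∃ c : ℕ → ℝ, ∃ N : ℕ → ℕ, (∀ n, 0 < c n) ∧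
    Filter.Tendsto (fun n : ℕ => c n ^ ((n : ℝ)⁻¹)) Filter.atTop (nhds 1) ∧
    Filter.Tendsto (fun n : ℕ => (N n : ℝ) / n) Filter.atTop (nhds 0) ∧
    ∀ g : G, ∀ n : ℕ, n₀ ≤ n →
      (∑' l : {l : List I // l.length = n ∧ l.Chain' A ∧ Ψ ψ₀ l = g},
          ENNReal.ofReal (Real.exp (Sw A f l.val))) ≤
        ENNReal.ofReal (c n) *
          ∑' l : {l : List I // l.Chain' A ∧ Ψ ψ₀ l = g⁻¹ ∧
              n - N n ≤ l.length ∧ l.length ≤ n + N n},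
            ENNReal.ofReal (Real.exp (Sw A f l.val))

/-- The left shift. -/
def shift (τ : ℕ → I) : ℕ → I := fun k => τ (k + 1)


section Helpers

lemma exists_cyl (hs : ∀ i : I, ∃ j, A i j) [Nonempty I] :
    ∀ l : List I, l.IsChain A → (Cyl A l).Nonempty := by
  choose s hs using hs
  have base : ∀ a : I, Adm A (fun n => s^[n] a) := by
    intro a n
    simp only [Function.iterate_succ_apply']
    exact hs _
  intro l
  induction l with
  | nil =>
    intro _
    exact ⟨_, base (Classical.arbitrary I), fun i h => absurd h (by simp)⟩
  | cons a l ih =>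
    intro h
    cases l with
    | nil =>
      refine ⟨_, base a, fun i h => ?_⟩
      have : i = 0 := by simpa using h
      subst this
      simp
    | cons b l =>
      rw [List.isChain_cons_cons] at h
      obtain ⟨τ, h1, h2⟩ := ih h.2
      refine ⟨fun n => Nat.casesOn n a τ, ?_, ?_⟩
      · intro n
        cases n with
        | zero =>
          have := h2 0 (by simp)
          simp at this
          simpa [this] using h.1
        | succ n => exact h1 n
      · intro i hi
        cases i with
        | zero => simp
        | succ i =>
          have := h2 i (by simpa using hi)
          simpa using this

lemma birk_add (f : (ℕ → I) → ℝ) (m n : ℕ) (τ : ℕ → I) :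
    birk f (m + n) τ = birk f m τ + birk f n (fun k => τ (k + m)) := by
  unfold birk
  rw [Finset.sum_range_add]
  congr 1
  refine Finset.sum_congr rfl fun i _ => ?_
  congr 1
  funext k
  congr 1
  omega

lemma adm_shift {τ : ℕ → I} (h : Adm A τ) (m : ℕ) : Adm A (fun k => τ (k + m)) := by
  intro n
  have := h (n + m)
  rwa [show n + m + 1 = n + 1 + m by omega] at this

lemma variation (f : (ℕ → I) → ℝ) (hf : Holder A f) :
    ∃ D : ℝ, ∀ n : ℕ, ∀ τ τ' : ℕ → I, Adm A τ → Adm A τ' →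
      (∀ i < n, τ i = τ' i) → birk f n τ ≤ birk f n τ' + D := by
  obtain ⟨α, hα, V, hV⟩ := hf
  set r := Real.exp (-α) with hr
  have hr0 : 0 ≤ r := (Real.exp_pos _).le
  have hr1 : r < 1 := by rw [hr, Real.exp_lt_one_iff]; linarith
  have key : ∀ n : ℕ, ∀ τ τ' : ℕ → I, Adm A τ → Adm A τ' →
      (∀ i < n, τ i = τ' i) →
      birk f n τ ≤ birk f n τ' + ∑ i ∈ Finset.range n, |V| * r ^ (i + 1) := by
    intro n
    induction n with
    | zero => intro τ τ' _ _ _; simp [birk]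
    | succ n ih =>
      intro τ τ' h h' hag
      have h1 := ih (fun k => τ (k + 1)) (fun k => τ' (k + 1)) (adm_shift A h 1)
        (adm_shift A h' 1) (fun i hi => hag (i + 1) (by omega))
      have h2 := hV (n + 1) (by omega) τ τ' h h' hag
      have h3 : V * Real.exp (-α * ((n + 1 : ℕ) : ℝ)) ≤ |V| * r ^ (n + 1) := by
        rw [hr, ← Real.exp_nat_mul, mul_comm (-α)]
        exact mul_le_mul_of_nonneg_right (le_abs_self V) (Real.exp_pos _).le
      rw [add_comm n 1, birk_add, birk_add, add_comm 1 n, Finset.sum_range_succ]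
      have e1 : ∀ τ : ℕ → I, birk f 1 τ = f τ := by intro τ; simp [birk]
      rw [e1, e1]
      have := (abs_le.1 h2).2
      linarith
  refine ⟨|V| * (r * (1 - r)⁻¹), fun n τ τ' h h' hag => (key n τ τ' h h' hag).trans ?_⟩
  have : ∑ i ∈ Finset.range n, |V| * r ^ (i + 1) ≤ |V| * (r * (1 - r)⁻¹) := by
    rw [← Finset.mul_sum]
    refine mul_le_mul_of_nonneg_left ?_ (abs_nonneg V)
    simp_rw [pow_succ']
    rw [← Finset.mul_sum]
    refine mul_le_mul_of_nonneg_left ?_ hr0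
    rw [← tsum_geometric_of_lt_one hr0 hr1]
    exact (summable_geometric_of_lt_one hr0 hr1).sum_le_tsum _ (fun i _ => pow_nonneg hr0 i)
  linarith

lemma le_Sw {f : (ℕ → I) → ℝ} {D : ℝ} (hD : ∀ n : ℕ, ∀ τ τ' : ℕ → I, Adm A τ → Adm A τ' →
      (∀ i < n, τ i = τ' i) → birk f n τ ≤ birk f n τ' + D) {l : List I} {τ : ℕ → I}
    (hτ : τ ∈ Cyl A l) : birk f l.length τ ≤ Sw A f l ∧ Sw A f l ≤ birk f l.length τ + D := by
  have hb : ∀ y ∈ {y | ∃ τ ∈ Cyl A l, y = birk f l.length τ}, y ≤ birk f l.length τ + D := by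
    rintro y ⟨τ', h', rfl⟩
    exact hD _ _ _ h'.1 hτ.1 (fun i hi => (h'.2 i hi).trans (hτ.2 i hi).symm)
  exact ⟨le_csSup ⟨_, hb⟩ ⟨τ, hτ, rfl⟩, csSup_le ⟨_, τ, hτ, rfl⟩ hb⟩

lemma cyl_append {l l' : List I} {τ : ℕ → I} (h : τ ∈ Cyl A (l ++ l')) :
    τ ∈ Cyl A l ∧ (fun k => τ (k + l.length)) ∈ Cyl A l' := by
  refine ⟨⟨h.1, fun i hi => ?_⟩, ⟨adm_shift A h.1 _, fun i hi => ?_⟩⟩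
  · have := h.2 i (by simp; omega)
    rw [this]
    simp [List.getElem_append_left hi]
  · have := h.2 (i + l.length) (by simp; omega)
    simp only [this]
    simp

lemma Sw_append {f : (ℕ → I) → ℝ} {D : ℝ} (hD : ∀ n : ℕ, ∀ τ τ' : ℕ → I, Adm A τ → Adm A τ' →
      (∀ i < n, τ i = τ' i) → birk f n τ ≤ birk f n τ' + D) {l l' : List I}
    (hne : (Cyl A (l ++ l')).Nonempty) :
    Sw A f l + Sw A f l' ≤ Sw A f (l ++ l') + 2 * D := by
  obtain ⟨τ, hτ⟩ := hne
  obtain ⟨h1, h2⟩ := cyl_append A hτ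
  have a := (le_Sw A hD hτ).1
  have b := (le_Sw A hD h1).2
  have c := (le_Sw A hD h2).2
  rw [List.length_append, birk_add] at a
  linarith

lemma connecting [Nonempty I] (hprim : FinPrim A) (hirr : IrrExt A ψ₀) :
    ∃ K : Finset (List I), (∀ k ∈ K, Ψ ψ₀ k = 1) ∧
      ∀ i j, ∃ k ∈ K, (i :: (k ++ [j])).IsChain A := by
  classical
  obtain ⟨m, F, hF, -, hc⟩ := hprim
  let a : I := Classical.arbitrary I
  choose u hu1 hu2 using hirr a a
  let κ : List I × List I → List I := fun p =>
    p.1 ++ ([a] ++ u ((Ψ ψ₀ p.1 * ψ₀ a)⁻¹ * (ψ₀ a * Ψ ψ₀ p.2)⁻¹) ++ [a]) ++ p.2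
  refine ⟨(hF.toFinset ×ˢ hF.toFinset).image κ, ?_, ?_⟩
  · intro k hk
    obtain ⟨p, -, rfl⟩ := Finset.mem_image.1 hk
    have h := hu2 ((Ψ ψ₀ p.1 * ψ₀ a)⁻¹ * (ψ₀ a * Ψ ψ₀ p.2)⁻¹)
    simp only [Ψ] at h
    simp only [κ, Ψ, List.map_append, List.prod_append, h, List.map_cons, List.map_nil,
      List.prod_cons, List.prod_nil]
    group
  · intro i j
    obtain ⟨w, hw, h1⟩ := hc i a
    obtain ⟨w', hw', h2⟩ := hc a j
    refine ⟨κ (w, w'), Finset.mem_image_of_mem _ (by simp [hw, hw']), ?_⟩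
    replace h1 : List.IsChain A (i :: (w ++ [a])) := h1
    replace h2 : List.IsChain A (a :: (w' ++ [j])) := h2
    have h3 : List.IsChain A (a :: (u ((Ψ ψ₀ w * ψ₀ a)⁻¹ * (ψ₀ a * Ψ ψ₀ w')⁻¹) ++ [a])) := hu1 ((Ψ ψ₀ w * ψ₀ a)⁻¹ * (ψ₀ a * Ψ ψ₀ w')⁻¹)
    have h4 := List.IsChain.append_overlap (l₁ := i :: w) (l₂ := [a])
      (l₃ := u ((Ψ ψ₀ w * ψ₀ a)⁻¹ * (ψ₀ a * Ψ ψ₀ w')⁻¹) ++ [a])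
      (by simpa using h1) (by simpa using h3) (by simp)
    have h5 := List.IsChain.append_overlap
      (l₁ := i :: w ++ [a] ++ u ((Ψ ψ₀ w * ψ₀ a)⁻¹ * (ψ₀ a * Ψ ψ₀ w')⁻¹)) (l₂ := [a])
      (l₃ := w' ++ [j])
      (by simpa using h4) (by simpa using h2) (by simp)
    simpa [κ] using h5

lemma glue {ω ω' : List I} {K : Finset (List I)}
    (hK : ∀ i j, ∃ k ∈ K, (i :: (k ++ [j])).IsChain A)
    (h1 : ω.IsChain A) (h2 : ω'.IsChain A) (n1 : ω ≠ []) (n2 : ω' ≠ []) :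
    ∃ k ∈ K, (ω ++ k ++ ω').IsChain A := by
  obtain ⟨p, i, rfl⟩ := List.eq_nil_or_concat' ω |>.resolve_left n1
  obtain ⟨j, q, rfl⟩ := List.exists_cons_of_ne_nil n2
  obtain ⟨k, hk, h⟩ := hK i j
  refine ⟨k, hk, ?_⟩
  have h4 := List.IsChain.append_overlap (l₁ := p) (l₂ := [i]) (l₃ := k ++ [j])
    h1 (by simpa using h) (by simp)
  have h5 := List.IsChain.append_overlap (l₁ := p ++ [i] ++ k) (l₂ := [j]) (l₃ := q)
    (by simpa using h4) (by simpa using h2) (by simp)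
  simpa using h5

lemma sum_glue (F : List I → ℝ≥0∞) (n : ℕ) (K : Finset (List I)) :
    (∑' ω : {ω : List I // ω.length = n}, ∑' ω' : List I, ∑ k ∈ K, F (ω.1 ++ k ++ ω'))
      ≤ K.card * ∑' l, F l := by
  have e : ∀ ω : {ω : List I // ω.length = n}, (∑' ω' : List I, ∑ k ∈ K, F (ω.1 ++ k ++ ω'))
      = ∑ k ∈ K, ∑' ω' : List I, F (ω.1 ++ k ++ ω') :=
    fun ω => Summable.tsum_finsetSum (fun _ _ => ENNReal.summable)
  simp_rw [e]
  rw [Summable.tsum_finsetSum (fun _ _ => ENNReal.summable), ← nsmul_eq_mul]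
  refine Finset.sum_le_card_nsmul _ _ _ fun k _ => ?_
  rw [← ENNReal.tsum_prod (f := fun (ω : {ω : List I // ω.length = n}) ω' => F (ω.1 ++ k ++ ω'))]
  refine ENNReal.tsum_comp_le_tsum_of_injective
    (f := fun p : {ω : List I // ω.length = n} × List I => p.1.1 ++ k ++ p.2) ?_ F
  rintro ⟨⟨ω, h⟩, ω'⟩ ⟨⟨v, hv⟩, v'⟩ he
  simp only [List.append_assoc] at he
  obtain ⟨h1, h2⟩ := List.append_inj he (h.trans hv.symm)
  have h3 := List.append_cancel_left h2
  simp [h1, h3]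

end Helpers

/- STATEMENT 16: Let Σ be finitely primitive, (Σ×G, σ⋊Ψ) irreducible, φ Hölder and
symmetric with respect to Ψ (asymptotically symmetric with bounded constants), with
P(2φ) = 0 and P(φ, Ψ⁻¹(id) ∩ Σ*) = 0, and suppose there is a σ-invariant Gibbs measure
μ for 2φ supported on Σ.  Then Σ_{ω ∈ Σ* ∩ Ψ⁻¹(id)} e^{S_ω φ} = ∞, i.e. φ∘π₁ is
recurrent. -/
theorem stmt16 [Countable I] [Countable G] [MeasurableSpace (ℕ → I)]
    (hprim : FinPrim A) (hirr : IrrExt A ψ₀)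
    (φ : (ℕ → I) → ℝ) (hφ : Holder A φ)
    (hsym : ∃ n₀ : ℕ, ∃ c : ℕ → ℝ, ∃ N : ℕ → ℕ, (∀ n, 0 < c n) ∧
      (∃ Cb : ℝ, ∀ n, c n ≤ Cb) ∧
      Filter.Tendsto (fun n : ℕ => c n ^ ((n : ℝ)⁻¹)) Filter.atTop (nhds 1) ∧
      Filter.Tendsto (fun n : ℕ => (N n : ℝ) / n) Filter.atTop (nhds 0) ∧
      ∀ g : G, ∀ n : ℕ, n₀ ≤ n →
        (∑' l : {l : List I // l.length = n ∧ l.Chain' A ∧ Ψ ψ₀ l = g},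
            ENNReal.ofReal (Real.exp (Sw A φ l.val))) ≤
          ENNReal.ofReal (c n) *
            ∑' l : {l : List I // l.Chain' A ∧ Ψ ψ₀ l = g⁻¹ ∧
                n - N n ≤ l.length ∧ l.length ≤ n + N n},
              ENNReal.ofReal (Real.exp (Sw A φ l.val)))
    (hP2 : pressureC A (fun τ => 2 * φ τ) (fun _ => True) = 0)
    (hPid : pressureC A φ (fun l => Ψ ψ₀ l = 1) = 0)
    (μ : MeasureTheory.Measure (ℕ → I))
    (hsupp : μ {τ | Adm A τ} = 1)
    (hinv : ∀ s : Set (ℕ → I), μ (shift ⁻¹' s) = μ s)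
    (hGibbs : ∃ Cμ > (0 : ℝ), ∀ l : List I, l.Chain' A → ∀ τ ∈ Cyl A l,
      ENNReal.ofReal (Cμ⁻¹ * Real.exp (birk (fun σ => 2 * φ σ) l.length τ)) ≤ μ (Cyl A l) ∧
      μ (Cyl A l) ≤ ENNReal.ofReal (Cμ * Real.exp (birk (fun σ => 2 * φ σ) l.length τ))) :
    (∑' l : {l : List I // l ≠ [] ∧ l.Chain' A ∧ Ψ ψ₀ l = 1},
        ENNReal.ofReal (Real.exp (Sw A φ l.val))) = ⊤ := by
  classical
  obtain ⟨n₀, c, N, -, ⟨Cb, hCb⟩, -, hN, hsym⟩ := hsym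
  obtain ⟨Cμ, hCμ, hGibbs⟩ := hGibbs
  obtain ⟨D, hD⟩ := variation A φ hφ
  have hI : Nonempty I := by
    by_contra h
    rw [not_nonempty_iff] at h
    have : ({τ | Adm A τ} : Set (ℕ → I)) = ∅ := by
      ext τ; exact (h.false (τ 0)).elim
    rw [this] at hsupp
    simp at hsupp
  have hsucc : ∀ i : I, ∃ j, A i j := by
    intro i
    obtain ⟨w, hw, -⟩ := hirr i i 1
    replace hw : List.IsChain A (i :: (w ++ [i])) := hw
    cases w with
    | nil => exact ⟨i, by simpa using hw⟩
    | cons b w =>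
      have hw' : List.IsChain A (i :: b :: (w ++ [i])) := by simpa using hw
      exact ⟨b, (List.isChain_cons_cons.1 hw').1⟩
  have hcyl := exists_cyl A hsucc
  obtain ⟨K, hK1, hK2⟩ := connecting A ψ₀ hprim hirr
  set E : List I → ℝ≥0∞ := fun l => ENNReal.ofReal (Real.exp (Sw A φ l)) with hE
  -- lower bound from the Gibbs property
  have hlow : ∀ n : ℕ, 1 ≤ ENNReal.ofReal Cμ *
      ∑' ω : {ω : List I // ω.length = n}, if ω.1.IsChain A then E ω.1 * E ω.1 else 0 := by
    intro n
    rw [← hsupp]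
    have hsub : {τ | Adm A τ} ⊆ ⋃ ω : {ω : List I // ω.length = n},
        (if ω.1.IsChain A then Cyl A ω.1 else ∅) := by
      intro τ hτ
      rw [Set.mem_iUnion]
      refine ⟨⟨List.ofFn (fun i : Fin n => τ i), by simp⟩, ?_⟩
      have hch : (List.ofFn (fun i : Fin n => τ i)).IsChain A := by
        rw [List.isChain_iff_getElem]
        intro i hi
        simpa using hτ i
      rw [if_pos hch]
      exact ⟨hτ, fun i hi => by simp⟩
    refine (MeasureTheory.measure_mono hsub).trans ?_
    refine (MeasureTheory.measure_iUnion_le _).trans ?_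
    rw [← ENNReal.tsum_mul_left]
    refine ENNReal.tsum_le_tsum fun ω => ?_
    by_cases hch : ω.1.IsChain A
    · simp only [if_pos hch]
      obtain ⟨τ, hτ⟩ := hcyl ω.1 hch
      refine (hGibbs ω.1 hch τ hτ).2.trans ?_
      rw [hE, ← ENNReal.ofReal_mul (Real.exp_pos _).le, ← ENNReal.ofReal_mul hCμ.le, ← Real.exp_add]
      refine ENNReal.ofReal_le_ofReal (mul_le_mul_of_nonneg_left (Real.exp_le_exp.2 ?_) hCμ.le)
      have h1 := (le_Sw A hD hτ).1
      have h2 : birk (fun σ => 2 * φ σ) ω.1.length τ = 2 * birk φ ω.1.length τ := by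
        simp [birk, Finset.mul_sum]
      linarith
    · simp [if_neg hch]
  -- gluing estimate
  obtain ⟨M, hM⟩ : ∃ M : ℝ, ∀ k ∈ K, 4 * D - Sw A φ k ≤ M := by
    obtain ⟨M, hM⟩ := (K.image (fun k => 4 * D - Sw A φ k)).exists_le
    exact ⟨M, fun k hk => hM _ (Finset.mem_image_of_mem _ hk)⟩
  set F : ℕ → List I → ℝ≥0∞ := fun n l =>
    if n ≤ l.length ∧ l.IsChain A ∧ Ψ ψ₀ l = 1 then E l else 0 with hF
  have hglue : ∀ ω ω' : List I, ω ≠ [] → ω' ≠ [] → ω.IsChain A → ω'.IsChain A →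
      Ψ ψ₀ ω' = (Ψ ψ₀ ω)⁻¹ →
      E ω * E ω' ≤ ENNReal.ofReal (Real.exp M) * ∑ k ∈ K, F ω.length (ω ++ k ++ ω') := by
    intro ω ω' n1 n2 c1 c2 hΨ
    obtain ⟨k, hk, hch⟩ := glue A hK2 c1 c2 n1 n2
    have h1 : F ω.length (ω ++ k ++ ω') ≤ ∑ k ∈ K, F ω.length (ω ++ k ++ ω') :=
      Finset.single_le_sum (f := fun k => F ω.length (ω ++ k ++ ω')) (fun _ _ => zero_le) hk
    refine le_trans ?_ (mul_le_mul_right h1 _)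
    have hΨ1 : Ψ ψ₀ (ω ++ k ++ ω') = 1 := by
      have e : Ψ ψ₀ (ω ++ k ++ ω') = Ψ ψ₀ ω * Ψ ψ₀ k * Ψ ψ₀ ω' := by simp [Ψ, mul_assoc]
      rw [e, hK1 k hk, hΨ]; simp
    have hcond : ω.length ≤ (ω ++ k ++ ω').length ∧ (ω ++ k ++ ω').IsChain A ∧
        Ψ ψ₀ (ω ++ k ++ ω') = 1 := ⟨by simp, hch, hΨ1⟩
    simp only [hF, if_pos hcond, hE]
    rw [← ENNReal.ofReal_mul (Real.exp_pos _).le, ← ENNReal.ofReal_mul (Real.exp_pos _).le,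
      ← Real.exp_add, ← Real.exp_add]
    refine ENNReal.ofReal_le_ofReal (Real.exp_le_exp.2 ?_)
    have hc := hcyl _ hch
    have a1 := Sw_append A hD hc
    have a2 := Sw_append A hD (hc.imp fun τ h => (cyl_append A h).1)
    have a3 := hM k hk
    linarith
  -- the tail sums are bounded below
  have hNn : ∀ᶠ n : ℕ in Filter.atTop, N n < n := by
    filter_upwards [hN.eventually (gt_mem_nhds (zero_lt_one)), Filter.eventually_gt_atTop 0]
      with n hn hn0
    have : (0 : ℝ) < n := by exact_mod_cast hn0
    rw [div_lt_one this] at hn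
    exact_mod_cast hn
  set B : ℝ≥0∞ := ENNReal.ofReal Cμ *
    (ENNReal.ofReal Cb * (ENNReal.ofReal (Real.exp M) * K.card)) with hB
  have hBtop : B ≠ ⊤ := by
    rw [hB]
    finiteness
  have hmain : ∀ᶠ n : ℕ in Filter.atTop, 1 ≤ B * ∑' l, F n l := by
    filter_upwards [hNn, Filter.eventually_ge_atTop n₀] with n hn hn0
    refine (hlow n).trans ?_
    rw [hB, mul_assoc, mul_assoc, mul_assoc]
    refine mul_le_mul_right ?_ _
    refine le_trans ?_ (mul_le_mul_right (mul_le_mul_right (sum_glue (F n) n K) _) _)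
    rw [← ENNReal.tsum_mul_left, ← ENNReal.tsum_mul_left]
    refine ENNReal.tsum_le_tsum fun ω => ?_
    obtain ⟨ω, hω⟩ := ω
    by_cases hch : ω.IsChain A
    swap
    · simp [hch]
    simp only [if_pos hch]
    have s1 : E ω ≤ ENNReal.ofReal Cb * ∑' l : {l : List I // l.Chain' A ∧
        Ψ ψ₀ l = (Ψ ψ₀ ω)⁻¹ ∧ n - N n ≤ l.length ∧ l.length ≤ n + N n}, E l.1 := by
      refine le_trans ?_ ((hsym (Ψ ψ₀ ω) n hn0).trans
        (mul_le_mul_left (ENNReal.ofReal_le_ofReal (hCb n)) _))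
      exact ENNReal.le_tsum (f := fun l : {l : List I // l.length = n ∧ l.Chain' A ∧
        Ψ ψ₀ l = Ψ ψ₀ ω} => E l.1) ⟨ω, hω, hch, rfl⟩
    refine (mul_le_mul_right s1 _).trans ?_
    rw [mul_left_comm]
    refine mul_le_mul_right ?_ _
    rw [← ENNReal.tsum_mul_left, ← ENNReal.tsum_mul_left]
    refine le_trans (ENNReal.tsum_le_tsum fun l => ?_)
      (ENNReal.tsum_comp_le_tsum_of_injective Subtype.val_injective _)
    obtain ⟨l, h1, h2, h3, h4⟩ := l
    have hg := hglue ω l (by rintro rfl; simp at hω; omega) (by rintro rfl; simp at h3; omega)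
      hch h1 h2
    rw [hω] at hg
    exact hg
  -- conclude
  by_contra hfin
  set G' : List I → ℝ≥0∞ := fun l =>
    if l ≠ [] ∧ l.IsChain A ∧ Ψ ψ₀ l = 1 then E l else 0 with hG'
  have hGsum : ∑' l, G' l ≠ ⊤ := by
    have e := tsum_subtype {l : List I | l ≠ [] ∧ l.IsChain A ∧ Ψ ψ₀ l = 1} E
    have e2 : ∑' l, G' l = ∑' l, Set.indicator {l : List I | l ≠ [] ∧ l.IsChain A ∧ Ψ ψ₀ l = 1} E l := by
      refine tsum_congr fun l => ?_
      simp [hG', Set.indicator_apply]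
    rw [e2, ← e]
    exact hfin
  have htail := ENNReal.Tendsto.const_mul (ENNReal.tendsto_tsum_compl_atTop_zero hGsum)
    (Or.inr hBtop)
  rw [mul_zero] at htail
  obtain ⟨s, hs⟩ := (htail.eventually (gt_mem_nhds (zero_lt_one))).exists
  obtain ⟨L, hL⟩ := (s.image List.length).exists_le
  obtain ⟨n, hn1, hn2⟩ := (hmain.and (Filter.eventually_gt_atTop L)).exists
  refine absurd (hn1.trans (mul_le_mul_right ?_ _)) (not_le.2 hs)
  have e := tsum_subtype {l : List I | l ∉ s} G'
  refine le_trans ?_ e.ge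
  refine ENNReal.tsum_le_tsum fun l => ?_
  by_cases h : n ≤ l.length ∧ l.IsChain A ∧ Ψ ψ₀ l = 1
  · have hls : l ∉ s := fun hl => by
      have := hL _ (Finset.mem_image_of_mem _ hl)
      omega
    have hne : l ≠ [] := by rintro rfl; simp at h; omega
    rw [Set.indicator_of_mem (by exact hls)]
    simp only [hF, hG', if_pos h, if_pos (And.intro hne h.2)]
    exact le_rfl
  · simp [hF, if_neg h]


end Stmt16
end

section
/- Let F_d be the free group on d ≥ 2 generators and N a non-trivial normal subgroup such that the quotient F_d/N is amenable, and let Φ be a conformal GDMS associated to F_d such that (N,Φ) is asymptotically symmetric. Then the exponents of convergence satisfy δ_N = δ, where δ_N = inf{u : Σ_{ω∈N} e^{u S_ω ζ} < ∞} and δ = inf{u : Σ_{ω∈F_d} e^{u S_ω ζ} < ∞}. (This may be reduced to: amenability of F_d/N together with asymptotic symmetry of the constant-free potential u ζ implies the restricted pressure P(uζ, N\{id}) equals the full pressure P(uζ) for each u, whence the critical exponents coincide.) -/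
namespace Stmt18

/-- Letters: the symmetric generating set `{g_1^{±1},…,g_d^{±1}}` of the free group. -/
abbrev Letter (d : ℕ) := Fin d × Bool

/-- Formal inverse of a letter. -/
def linv {d : ℕ} (x : Letter d) : Letter d := (x.1, !x.2)

/-- The element of the free group represented by a letter. -/
def toG {d : ℕ} (x : Letter d) : FreeGroup (Fin d) := FreeGroup.mk [x]

/-- The element of the free group represented by a finite word. -/
def prodL {d : ℕ} (l : List (Letter d)) : FreeGroup (Fin d) := (l.map toG).prod

/-- A finite word is reduced. -/
def Red {d : ℕ} (l : List (Letter d)) : Prop := l.Chain' fun a b => b ≠ linv a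

/-- An infinite word is reduced (i.e. lies in the shift space Σ). -/
def Adm {d : ℕ} (τ : ℕ → Letter d) : Prop := ∀ n, τ (n + 1) ≠ linv (τ n)

/-- The cylinder set of a finite word in Σ. -/
def Cyl {d : ℕ} (l : List (Letter d)) : Set (ℕ → Letter d) :=
  {τ | Adm τ ∧ ∀ i, (h : i < l.length) → τ i = l.get ⟨i, h⟩}

/-- Birkhoff (ergodic) sum `S_n f(τ)`. -/
def birk {d : ℕ} (f : (ℕ → Letter d) → ℝ) (n : ℕ) (τ : ℕ → Letter d) : ℝ :=
  ∑ i ∈ Finset.range n, f fun k => τ (k + i)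

/-- `S_ω f := sup_{τ ∈ [ω]} S_{|ω|} f(τ)`. -/
noncomputable def Sw {d : ℕ} (f : (ℕ → Letter d) → ℝ) (l : List (Letter d)) : ℝ :=
  sSup {y | ∃ τ ∈ Cyl l, y = birk f l.length τ}

/-- `S_ω f` for a group element `ω ∈ F_d`, via its reduced word. -/
noncomputable def Sx {d : ℕ} (f : (ℕ → Letter d) → ℝ) (x : FreeGroup (Fin d)) : ℝ :=
  Sw f x.toWord

/-- Hölder continuity on Σ with respect to some metric `d_α`. -/
def Holder {d : ℕ} (f : (ℕ → Letter d) → ℝ) : Prop :=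
  ∃ α > (0 : ℝ), ∃ V : ℝ, ∀ n : ℕ, 1 ≤ n → ∀ τ τ' : ℕ → Letter d, Adm τ → Adm τ' →
    (∀ i < n, τ i = τ' i) → |f τ - f τ'| ≤ V * Real.exp (-α * n)

/-- `ζ` qualifies as the geometric potential of a conformal GDMS associated to `F_d`:
it is Hölder continuous and bounded above by `log s` for some contraction ratio
`0 < s < 1` (so that `sup ζ < 0`). -/
def GeomPot {d : ℕ} (ζ : (ℕ → Letter d) → ℝ) : Prop :=
  Holder ζ ∧ ∃ s : ℝ, 0 < s ∧ s < 1 ∧ ∀ τ, ζ τ ≤ Real.log s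

/-- A discrete group is amenable if it carries a left-invariant finitely additive
probability measure defined on all subsets. -/
def IsAmenable (H : Type*) [Group H] : Prop :=
  ∃ m : Set H → ℝ, (∀ s, 0 ≤ m s) ∧ m Set.univ = 1 ∧
    (∀ s t : Set H, Disjoint s t → m (s ∪ t) = m s + m t) ∧
    ∀ (h : H) (s : Set H), m ((h * ·) '' s) = m s

/-- `(N, ζ)` is asymptotically symmetric: for each `u` there are constants
`c_n` with `c_n^{1/n} → 1` and `N_n` with `N_n/n → 0` such that for all `g` and all
large `n`, `Σ_{ω ∈ Ng, |ω| = n} e^{u S_ω ζ} ≤ c_n Σ_{ω ∈ Ng⁻¹, n-N_n ≤ |ω| ≤ n+N_n}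
e^{u S_ω ζ}` (sums over reduced words). -/
def AsympSymm {d : ℕ} (N : Subgroup (FreeGroup (Fin d))) (ζ : (ℕ → Letter d) → ℝ) : Prop :=
  ∀ u : ℝ, ∃ n₀ : ℕ, ∃ c : ℕ → ℝ, ∃ M : ℕ → ℕ, (∀ n, 0 < c n) ∧
    Filter.Tendsto (fun n : ℕ => c n ^ ((n : ℝ)⁻¹)) Filter.atTop (nhds 1) ∧
    Filter.Tendsto (fun n : ℕ => (M n : ℝ) / n) Filter.atTop (nhds 0) ∧
    ∀ g : FreeGroup (Fin d), ∀ n : ℕ, n₀ ≤ n →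
      (∑' l : {l : List (Letter d) // l.length = n ∧ Red l ∧ prodL l * g⁻¹ ∈ N},
          Real.exp (u * Sw ζ l.val)) ≤
        c n * ∑' l : {l : List (Letter d) // Red l ∧ prodL l * g ∈ N ∧
            n - M n ≤ l.length ∧ l.length ≤ n + M n},
          Real.exp (u * Sw ζ l.val)


/-! ### Finitely additive means -/

theorem mean_aux {G ι : Type*} [DecidableEq ι] (m : Set G → ℝ) (h0 : ∀ s, 0 ≤ m s)
    (hadd : ∀ s t : Set G, Disjoint s t → m (s ∪ t) = m s + m t) (c : ι → ℝ) (A : ι → Set G)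
    (S : Finset ι) : ∀ (E : Set G) (K : ℝ),
    (∀ x ∈ E, ∑ s ∈ S, c s * (A s).indicator 1 x ≤ K) →
    ∑ s ∈ S, c s * m (A s ∩ E) ≤ K * m E := by
  classical
  induction S using Finset.induction_on with
  | empty =>
    intro E K h
    simp only [Finset.sum_empty] at h ⊢
    rcases E.eq_empty_or_nonempty with rfl | ⟨x, hx⟩
    · have := hadd ∅ ∅ (by simp)
      simp only [Set.union_self] at this
      have h1 : m ∅ = 0 := by linarith
      simp [h1]
    · exact mul_nonneg (h x hx) (h0 _)
  | insert a S ha ih =>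
    intro E K h
    have split : ∀ B : Set G, m (B ∩ E) = m (B ∩ (E ∩ A a)) + m (B ∩ (E \ A a)) := by
      intro B
      rw [← hadd]
      · congr 1
        ext x
        simp only [Set.mem_inter_iff, Set.mem_union, Set.mem_sdiff]
        tauto
      · rw [Set.disjoint_left]
        rintro x ⟨_, _, h1⟩ ⟨_, _, h2⟩
        exact h2 h1
    have i1 := ih (E ∩ A a) (K - c a) (by
      intro x hx
      have := h x hx.1
      rw [Finset.sum_insert ha, Set.indicator_of_mem hx.2] at this
      simp only [Pi.one_apply, mul_one] at this
      linarith)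
    have i2 := ih (E \ A a) K (by
      intro x hx
      have := h x hx.1
      rw [Finset.sum_insert ha, Set.indicator_of_notMem hx.2] at this
      simpa using this)
    have hE := split Set.univ
    simp only [Set.univ_inter] at hE
    rw [Finset.sum_insert ha, Finset.sum_congr rfl (fun s _ => by rw [split (A s), mul_add]),
      Finset.sum_add_distrib, hE, Set.inter_comm (A a) E]
    linarith

theorem mean_bound {G ι : Type*} [Group G] [DecidableEq ι] (hG : IsAmenable G)
    (S : Finset ι) (a : ι → G) (c : ι → ℝ) (hc : ∀ s, 0 ≤ c s) (H : G → ℝ) (hH : ∀ x, 0 < H x)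
    (K₁ K₂ : ℝ) (h₁ : ∀ x, ∑ s ∈ S, c s * H (a s * x) ≤ K₁ * H x)
    (h₂ : ∀ x, ∑ s ∈ S, c s * H ((a s)⁻¹ * x) ≤ K₂ * H x) :
    ∑ s ∈ S, c s ≤ K₁ + K₂ := by
  classical
  obtain ⟨m, h0, h1, hadd, hinv⟩ := hG
  let A : ι → Set G := fun s => {x | H x ≤ H (a s * x)}
  let B : ι → Set G := fun s => (a s * ·) '' (A s)ᶜ
  have key : ∀ (A : ι → Set G) (b : ι → G) (K : ℝ), (∀ s, ∀ x ∈ A s, H x ≤ H (b s * x)) →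
      (∀ x, ∑ s ∈ S, c s * H (b s * x) ≤ K * H x) → ∑ s ∈ S, c s * m (A s) ≤ K := by
    intro A b K hA hK
    have := mean_aux m h0 hadd c A S Set.univ K (by
      intro x _
      have hx := hH x
      have : (∑ s ∈ S, c s * (A s).indicator 1 x) * H x ≤ K * H x := by
        refine le_trans ?_ (hK x)
        rw [Finset.sum_mul]
        refine Finset.sum_le_sum fun s _ => ?_
        rw [mul_assoc]
        refine mul_le_mul_of_nonneg_left ?_ (hc s)
        by_cases hs : x ∈ A s
        · simpa [hs] using hA s x hs
        · simpa [hs] using (hH _).le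
      exact le_of_mul_le_mul_right this hx)
    simpa [h1] using this
  have k1 := key A a K₁ (fun s x hx => hx) h₁
  have k2 := key B (fun s => (a s)⁻¹) K₂ (by
    rintro s _ ⟨x, hx, rfl⟩
    have : ¬ H x ≤ H (a s * x) := hx
    simp only [inv_mul_cancel_left]
    linarith) h₂
  have : ∀ s, m (A s) + m (B s) = 1 := by
    intro s
    simp only [B]
    rw [hinv, ← hadd _ _ disjoint_compl_right, Set.union_compl_self, h1]
  calc ∑ s ∈ S, c s = ∑ s ∈ S, (c s * m (A s) + c s * m (B s)) := by
        refine Finset.sum_congr rfl fun s _ => ?_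
        rw [← mul_add, this, mul_one]
    _ ≤ K₁ + K₂ := by
        rw [Finset.sum_add_distrib]
        linarith

/-! ### Words -/

theorem linv_linv {d : ℕ} (x : Letter d) : linv (linv x) = x := by
  simp [linv]

theorem linv_ne {d : ℕ} (x : Letter d) : x ≠ linv x := by
  intro h
  have := congrArg Prod.snd h
  simp [linv] at this

theorem prodL_eq {d : ℕ} (l : List (Letter d)) : prodL l = FreeGroup.mk l := by
  induction l with
  | nil => rfl
  | cons a l ih =>
    have : prodL (a :: l) = toG a * prodL l := by simp [prodL]
    rw [this, ih, toG, FreeGroup.mul_mk]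
    rfl

theorem prodL_append {d : ℕ} (l l' : List (Letter d)) : prodL (l ++ l') = prodL l * prodL l' := by
  simp [prodL]

theorem red_iff {d : ℕ} (l : List (Letter d)) : Red l ↔ FreeGroup.IsReduced l := by
  unfold Red FreeGroup.IsReduced List.Chain'
  have : (fun a b : Letter d => b ≠ linv a) = fun a b => a.1 = b.1 → a.2 = b.2 := by
    funext a b
    rcases a with ⟨a, x⟩
    rcases b with ⟨b, y⟩
    simp only [linv, ne_eq, Prod.mk.injEq, eq_iff_iff]
    cases x <;> cases y <;> simp [eq_comm]
  rw [this]

theorem toWord_prodL {d : ℕ} {l : List (Letter d)} (h : Red l) : (prodL l).toWord = l := by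
  rw [prodL_eq, FreeGroup.toWord_mk]
  exact ((red_iff l).1 h).reduce_eq

theorem red_toWord {d : ℕ} (x : FreeGroup (Fin d)) : Red x.toWord :=
  (red_iff _).2 FreeGroup.isReduced_toWord

theorem prodL_toWord {d : ℕ} (x : FreeGroup (Fin d)) : prodL x.toWord = x := by
  rw [prodL_eq, FreeGroup.mk_toWord]

theorem red_append {d : ℕ} (l l' : List (Letter d)) :
    Red (l ++ l') ↔ Red l ∧ Red l' ∧ ∀ x ∈ l.getLast?, ∀ y ∈ l'.head?, y ≠ linv x :=
  List.isChain_append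

theorem exists_letter {d : ℕ} (hd : 2 ≤ d) (a b c : Letter d) :
    ∃ x : Letter d, x ≠ a ∧ x ≠ b ∧ x ≠ c := by
  have h : ({a, b, c} : Finset (Letter d)).card < (Finset.univ : Finset (Letter d)).card := by
    have h1 : ({a, b, c} : Finset (Letter d)).card ≤ 3 := Finset.card_le_three
    have h2 : (Finset.univ : Finset (Letter d)).card = d * 2 := by simp
    omega
  obtain ⟨e, _, he⟩ := Finset.exists_mem_notMem_of_card_lt_card h
  simp only [Finset.mem_insert, Finset.mem_singleton, not_or] at he
  exact ⟨e, he⟩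

/-- Connecting words inside `N`. -/
theorem exists_conn {d : ℕ} (hd : 2 ≤ d) (N : Subgroup (FreeGroup (Fin d))) [N.Normal]
    (hN : N ≠ ⊥) : ∃ L : ℕ, ∀ a b : List (Letter d), ∃ v : List (Letter d),
      Red a → Red b → v.length = L ∧ prodL v ∈ N ∧ Red (a ++ v ++ b) := by
  obtain ⟨t, htN, ht1⟩ := N.bot_or_exists_ne_one.resolve_left hN
  obtain ⟨w, hw⟩ : ∃ w, w = t.toWord := ⟨_, rfl⟩
  have hwr : Red w := hw ▸ red_toWord t
  have hwN : prodL w ∈ N := by rw [hw, prodL_toWord]; exact htN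
  have hw0 : w ≠ [] := by
    rw [hw]
    exact fun h => ht1 (FreeGroup.toWord_eq_nil_iff.1 h)
  clear hw
  obtain ⟨q, hq1, hq2, -⟩ := exists_letter hd (linv (w.head hw0)) (w.getLast hw0) (w.getLast hw0)
  refine ⟨w.length + 4, fun a b => ?_⟩
  obtain ⟨p, hp1, hp2, hp3⟩ := exists_letter hd (linv (a.getLastD q)) (b.headD q) (linv q)
  refine ⟨[p, q] ++ w ++ [linv q, linv p], fun ha hb => ⟨by simp, ?_, ?_⟩⟩
  · have h1 : prodL [linv q, linv p] = (prodL [p, q])⁻¹ := by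
      rw [prodL_eq, prodL_eq, FreeGroup.inv_mk]
      simp [FreeGroup.invRev, linv]
    rw [prodL_append, prodL_append, h1]
    exact Subgroup.Normal.conj_mem ‹_› _ hwN _
  · have hpq : q ≠ linv p := fun h => hp3 (by rw [h, linv_linv])
    have r1 : Red [p, q] := by
      unfold Red List.Chain'
      simp [hpq]
    have r2 : Red [linv q, linv p] := by
      unfold Red List.Chain'
      simp only [List.isChain_cons_cons, List.isChain_singleton, and_true, linv_linv]
      exact fun h => hpq h.symm
    rw [red_append, red_append, red_append, red_append]
    refine ⟨⟨ha, ⟨⟨r1, hwr, ?_⟩, r2, ?_⟩, ?_⟩, hb, ?_⟩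
    · simp only [List.head?_eq_some_head hw0]
      rintro x hx y hy
      simp at hx hy
      subst hx hy
      intro h
      exact hq1 (by rw [h, linv_linv])
    · simp only [List.getLast?_append, List.getLast?_eq_some_getLast hw0]
      rintro x hx y hy
      simp at hx hy
      subst hx hy
      intro h
      exact hq2 (by rw [← linv_linv q, h, linv_linv])
    · rintro x hx y hy
      simp at hx hy
      subst hy
      have : a.getLastD q = x := by
        rw [List.getLastD_eq_getLast?, hx]; rfl
      rwa [this] at hp1
    · rintro x hx y hy
      rw [List.getLast?_append, List.getLast?_append] at hx
      simp at hx hy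
      subst hx
      have : b.headD q = y := by
        rw [List.headD_eq_head?_getD, hy]; rfl
      rw [this] at hp2
      rw [linv_linv]
      exact hp2.symm

/-! ### Distortion -/

theorem cyl_nonempty {d : ℕ} (hd : 2 ≤ d) {l : List (Letter d)} (hl : Red l) : (Cyl l).Nonempty := by
  obtain ⟨x, hx⟩ : ∃ x : Letter d, ∀ h : l ≠ [], l.getLast h = x := by
    by_cases h : l = []
    · exact ⟨(⟨0, by omega⟩, true), fun h' => absurd h h'⟩
    · exact ⟨l.getLast h, fun _ => rfl⟩
  refine ⟨fun i => l.getD i x, ?_, ?_⟩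
  · intro n
    have hl' : ∀ (i : ℕ) (_hi : i + 1 < l.length), l[i + 1] ≠ linv l[i] :=
      List.isChain_iff_getElem.1 hl
    simp only [List.getD_eq_getElem?_getD]
    by_cases h : n + 1 < l.length
    · have h' : n < l.length := by omega
      rw [List.getElem?_eq_getElem h, List.getElem?_eq_getElem h']
      exact hl' n h
    · rw [List.getElem?_eq_none (by omega)]
      by_cases h' : n < l.length
      · rw [List.getElem?_eq_getElem h']
        have hne : l ≠ [] := by rintro rfl; simp at h'
        have := hx hne
        rw [List.getLast_eq_getElem] at this
        have e : n = l.length - 1 := by omega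
        subst e
        simp only [Option.getD_some, Option.getD_none]
        rw [this]
        exact linv_ne x
      · rw [List.getElem?_eq_none (by omega)]
        exact linv_ne x
  · intro i hi
    simp [List.getD_eq_getElem?_getD, List.getElem?_eq_getElem hi]

theorem cyl_append {d : ℕ} {l l' : List (Letter d)} {τ : ℕ → Letter d} (h : τ ∈ Cyl (l ++ l')) :
    τ ∈ Cyl l ∧ (fun k => τ (k + l.length)) ∈ Cyl l' := by
  obtain ⟨h1, h2⟩ := h
  refine ⟨⟨h1, fun i hi => ?_⟩, fun n => ?_, fun i hi => ?_⟩
  · rw [h2 i (by simp; omega)]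
    simp [List.getElem_append_left hi]
  · have := h1 (n + l.length)
    rwa [show n + l.length + 1 = n + 1 + l.length by ring] at this
  · change τ (i + l.length) = _
    rw [h2 (i + l.length) (by simp; omega)]
    simp

theorem birk_add {d : ℕ} (f : (ℕ → Letter d) → ℝ) (m n : ℕ) (τ : ℕ → Letter d) :
    birk f (m + n) τ = birk f m τ + birk f n (fun k => τ (k + m)) := by
  unfold birk
  rw [Finset.sum_range_add]
  congr 1
  refine Finset.sum_congr rfl fun i _ => ?_
  congr 1
  funext k
  congr 1
  ring

theorem distortion {d : ℕ} {f : (ℕ → Letter d) → ℝ} (hf : Holder f) :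
    ∃ D : ℝ, 0 ≤ D ∧ ∀ (l : List (Letter d)), ∀ τ ∈ Cyl l, ∀ τ' ∈ Cyl l,
      birk f l.length τ ≤ birk f l.length τ' + D := by
  obtain ⟨α, hα, V, hV⟩ := hf
  have hr0 : 0 ≤ Real.exp (-α) := (Real.exp_pos _).le
  have hr1 : Real.exp (-α) < 1 := by simpa using hα
  refine ⟨|V| * (1 - Real.exp (-α))⁻¹,
    mul_nonneg (abs_nonneg _) (inv_nonneg.2 (by linarith)), ?_⟩
  rintro l τ ⟨ht, h⟩ τ' ⟨ht', h'⟩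
  have key : birk f l.length τ - birk f l.length τ' ≤
      ∑ i ∈ Finset.range l.length, |V| * Real.exp (-α) ^ (l.length - 1 - i) := by
    unfold birk
    rw [← Finset.sum_sub_distrib]
    refine Finset.sum_le_sum fun i hi => ?_
    have hi' := Finset.mem_range.1 hi
    have sh : ∀ σ : ℕ → Letter d, Adm σ → Adm (fun k => σ (k + i)) := by
      intro σ hσ n
      have := hσ (n + i)
      rwa [show n + i + 1 = n + 1 + i by ring] at this
    have := hV (l.length - i) (by omega) (fun k => τ (k + i)) (fun k => τ' (k + i))
      (sh _ ht) (sh _ ht') (by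
        intro k hk
        rw [h (k + i) (by omega), h' (k + i) (by omega)])
    refine (le_abs_self _).trans (this.trans ?_)
    refine (mul_le_mul_of_nonneg_right (le_abs_self V) (Real.exp_pos _).le).trans ?_
    refine mul_le_mul_of_nonneg_left ?_ (abs_nonneg _)
    rw [← Real.exp_nat_mul]
    apply Real.exp_le_exp.2
    have : ((l.length - 1 - i : ℕ) : ℝ) ≤ ((l.length - i : ℕ) : ℝ) := by
      exact_mod_cast (by omega)
    nlinarith
  rw [← Finset.mul_sum, Finset.sum_range_reflect (fun i => Real.exp (-α) ^ i)] at key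
  have g : ∑ i ∈ Finset.range l.length, Real.exp (-α) ^ i ≤ (1 - Real.exp (-α))⁻¹ := by
    rw [← tsum_geometric_of_lt_one hr0 hr1]
    exact (summable_geometric_of_lt_one hr0 hr1).sum_le_tsum _ (fun i _ => pow_nonneg hr0 i)
  have := mul_le_mul_of_nonneg_left g (abs_nonneg V)
  linarith

theorem birk_le {d : ℕ} {f : (ℕ → Letter d) → ℝ} {b : ℝ} (hb : ∀ τ, f τ ≤ b) (n : ℕ)
    (τ : ℕ → Letter d) : birk f n τ ≤ n * b := by
  unfold birk
  calc _ ≤ ∑ i ∈ Finset.range n, b := Finset.sum_le_sum fun i _ => hb _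
    _ = n * b := by simp

theorem Sw_le {d : ℕ} (hd : 2 ≤ d) {f : (ℕ → Letter d) → ℝ} {b : ℝ} (hb : ∀ τ, f τ ≤ b)
    {l : List (Letter d)} (hl : Red l) : Sw f l ≤ l.length * b := by
  obtain ⟨τ, hτ⟩ := cyl_nonempty hd hl
  refine csSup_le ⟨_, τ, hτ, rfl⟩ ?_
  rintro y ⟨τ', _, rfl⟩
  exact birk_le hb _ _

theorem le_Sw {d : ℕ} {f : (ℕ → Letter d) → ℝ} {b : ℝ} (hb : ∀ τ, f τ ≤ b)
    {l : List (Letter d)} {τ : ℕ → Letter d} (hτ : τ ∈ Cyl l) : birk f l.length τ ≤ Sw f l := by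
  refine le_csSup ⟨l.length * b, ?_⟩ ⟨τ, hτ, rfl⟩
  rintro y ⟨τ', _, rfl⟩
  exact birk_le hb _ _

theorem Sw_append {d : ℕ} (hd : 2 ≤ d) {f : (ℕ → Letter d) → ℝ} (hf : GeomPot f) :
    ∃ D : ℝ, 0 ≤ D ∧ ∀ l l' : List (Letter d), Red (l ++ l') →
      Sw f l + Sw f l' ≤ Sw f (l ++ l') + D := by
  obtain ⟨hH, s, _, _, hb⟩ := hf
  obtain ⟨D, hD, h⟩ := distortion hH
  refine ⟨D + D, by positivity, fun l l' hl => ?_⟩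
  have key : ∀ l : List (Letter d), ∀ τ ∈ Cyl l, Sw f l ≤ birk f l.length τ + D := by
    intro l τ hτ
    refine csSup_le ⟨_, τ, hτ, rfl⟩ ?_
    rintro y ⟨τ', h', rfl⟩
    exact h l τ' h' τ hτ
  obtain ⟨τ, hτ⟩ := cyl_nonempty hd hl
  obtain ⟨h1, h2⟩ := cyl_append hτ
  have e := birk_add f l.length l'.length τ
  have := le_Sw hb hτ
  rw [List.length_append, e] at this
  have := key _ _ h1
  have := key _ _ h2
  linarith

/-- Gluing of words: a connecting map with bounded distortion. -/
theorem exists_glue {d : ℕ} (hd : 2 ≤ d) (N : Subgroup (FreeGroup (Fin d))) [N.Normal]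
    (hN : N ≠ ⊥) {f : (ℕ → Letter d) → ℝ} (hf : GeomPot f) :
    ∃ (L : ℕ) (D : ℝ) (v : List (Letter d) → List (Letter d) → List (Letter d)),
      ∀ a b, Red a → Red b → (v a b).length = L ∧ prodL (v a b) ∈ N ∧ Red (a ++ v a b ++ b) ∧
        Sw f a + Sw f b ≤ Sw f (a ++ v a b ++ b) + D := by
  obtain ⟨L, hL⟩ := exists_conn hd N hN
  choose v hv using hL
  obtain ⟨D, hD, h⟩ := Sw_append hd hf
  obtain ⟨C, hC⟩ := ((List.finite_length_eq (Letter d) L).image (Sw f)).bddBelow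
  refine ⟨L, D + D - C, v, fun a b ha hb => ?_⟩
  obtain ⟨h1, h2, h3⟩ := hv a b ha hb
  refine ⟨h1, h2, h3, ?_⟩
  have := h _ _ h3
  have := h _ _ ((red_append _ _).1 h3).1
  have := hC ⟨v a b, h1, rfl⟩
  linarith

/-! ### Weighted sums -/

open scoped ENNReal

theorem tsum_le_of_injOn {α β : Type*} (F : α → ℝ≥0∞) (H : β → ℝ≥0∞) (g : α → β) (s : Set α)
    (hs : ∀ a, a ∉ s → F a = 0) (inj : Set.InjOn g s) (h : ∀ a ∈ s, F a ≤ H (g a)) :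
    ∑' a, F a ≤ ∑' b, H b := by
  have h1 : Function.support F ⊆ s := by
    intro a ha
    by_contra h'
    exact ha (hs a h')
  rw [← tsum_subtype_eq_of_support_subset h1]
  calc ∑' x : s, F x ≤ ∑' x : s, H (g x) := ENNReal.tsum_le_tsum fun x => h x x.2
    _ ≤ ∑' b, H b := ENNReal.tsum_comp_le_tsum_of_injective
        (f := fun x : s => g x) (fun x y hxy => Subtype.ext (inj x.2 y.2 hxy)) H

/-- Weight of a word (zero for non-reduced words). -/
noncomputable def wt {d : ℕ} (f : (ℕ → Letter d) → ℝ) (u : ℝ) (l : List (Letter d)) : ℝ≥0∞ :=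
  open Classical in if Red l then ENNReal.ofReal (Real.exp (u * Sw f l)) else 0

theorem wt_ne_top {d : ℕ} (f : (ℕ → Letter d) → ℝ) (u : ℝ) (l : List (Letter d)) :
    wt f u l ≠ ∞ := by
  unfold wt
  split_ifs <;> simp

theorem wt_of_red {d : ℕ} (f : (ℕ → Letter d) → ℝ) (u : ℝ) {l : List (Letter d)} (h : Red l) :
    wt f u l = ENNReal.ofReal (Real.exp (u * Sw f l)) := by
  simp [wt, h]

theorem wt_pos {d : ℕ} (f : (ℕ → Letter d) → ℝ) (u : ℝ) {l : List (Letter d)} (h : Red l) :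
    wt f u l ≠ 0 := by
  simp [wt, h, Real.exp_pos]

/-- Class of a word in the quotient. -/
def cls {d : ℕ} (N : Subgroup (FreeGroup (Fin d))) (l : List (Letter d)) :
    FreeGroup (Fin d) ⧸ N := (prodL l : FreeGroup (Fin d) ⧸ N)

/-- The Green function. -/
noncomputable def Gr {d : ℕ} (N : Subgroup (FreeGroup (Fin d))) (f : (ℕ → Letter d) → ℝ) (u : ℝ)
    (y : FreeGroup (Fin d) ⧸ N) : ℝ≥0∞ :=
  open Classical in ∑' l, if cls N l = y then wt f u l else 0

theorem cls_surj {d : ℕ} (N : Subgroup (FreeGroup (Fin d))) (y : FreeGroup (Fin d) ⧸ N) :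
    ∃ l, Red l ∧ cls N l = y := by
  obtain ⟨x, rfl⟩ := QuotientGroup.mk_surjective y
  exact ⟨x.toWord, red_toWord x, by rw [cls, prodL_toWord]⟩

theorem cls_append {d : ℕ} (N : Subgroup (FreeGroup (Fin d))) [N.Normal] (a b : List (Letter d)) :
    cls N (a ++ b) = cls N a * cls N b := by
  simp [cls, prodL_append]

theorem Gr_pos {d : ℕ} (N : Subgroup (FreeGroup (Fin d))) (f : (ℕ → Letter d) → ℝ) (u : ℝ)
    (y : FreeGroup (Fin d) ⧸ N) : Gr N f u y ≠ 0 := by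
  classical
  obtain ⟨l, hl, hy⟩ := cls_surj N y
  intro h
  rw [Gr, ENNReal.tsum_eq_zero] at h
  have := h l
  rw [if_pos hy] at this
  exact wt_pos f u hl this

theorem glue_bounds {d : ℕ} (hd : 2 ≤ d) (N : Subgroup (FreeGroup (Fin d))) [N.Normal]
    (hN : N ≠ ⊥) {f : (ℕ → Letter d) → ℝ} (hf : GeomPot f) {u : ℝ} (hu : 0 ≤ u) :
    ∃ K : ℝ≥0∞, K ≠ ∞ ∧
      (∀ (n : ℕ) (y : FreeGroup (Fin d) ⧸ N),
        ∑' l : List (Letter d), (if l.length = n then wt f u l * Gr N f u ((cls N l)⁻¹ * y) else 0)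
          ≤ K * Gr N f u y) ∧
      (∀ (b : List (Letter d)) (y : FreeGroup (Fin d) ⧸ N),
        Gr N f u y * wt f u b ≤ K * Gr N f u (y * cls N b)) := by
  classical
  obtain ⟨L, D, v, hv⟩ := exists_glue hd N hN hf
  have hw : ∀ a b, Red a → Red b →
      wt f u a * wt f u b ≤ ENNReal.ofReal (Real.exp (u * D)) * wt f u (a ++ v a b ++ b) := by
    intro a b ha hb
    obtain ⟨h1, h2, h3, h4⟩ := hv a b ha hb
    rw [wt_of_red f u ha, wt_of_red f u hb, wt_of_red f u h3,
      ← ENNReal.ofReal_mul (Real.exp_pos _).le, ← ENNReal.ofReal_mul (Real.exp_pos _).le,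
      ← Real.exp_add, ← Real.exp_add]
    apply ENNReal.ofReal_le_ofReal
    apply Real.exp_le_exp.2
    nlinarith
  have hcl : ∀ a b, Red a → Red b → cls N (a ++ v a b ++ b) = cls N a * cls N b := by
    intro a b ha hb
    obtain ⟨h1, h2, h3, h4⟩ := hv a b ha hb
    rw [cls_append, cls_append]
    have : cls N (v a b) = 1 := (QuotientGroup.eq_one_iff _).2 h2
    rw [this, mul_one]
  have nred : ∀ l, ¬ Red l → wt f u l = 0 := fun l h => by simp [wt, h]
  refine ⟨ENNReal.ofReal (Real.exp (u * D)), ENNReal.ofReal_ne_top, fun n y => ?_, fun b y => ?_⟩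
  · have e : ∀ l : List (Letter d),
        (if l.length = n then wt f u l * Gr N f u ((cls N l)⁻¹ * y) else 0) =
        ∑' l', if l.length = n ∧ cls N l' = (cls N l)⁻¹ * y then wt f u l * wt f u l' else 0 := by
      intro l
      by_cases hl : l.length = n
      · simp only [hl, if_true, true_and]
        rw [Gr, ← ENNReal.tsum_mul_left]
        refine tsum_congr fun l' => ?_
        split_ifs <;> simp
      · simp [hl]
    rw [tsum_congr e, ← ENNReal.tsum_prod, Gr, ← ENNReal.tsum_mul_left]
    refine tsum_le_of_injOn _ _ (fun p => p.1 ++ v p.1 p.2 ++ p.2)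
      {p | p.1.length = n ∧ cls N p.2 = (cls N p.1)⁻¹ * y ∧ Red p.1 ∧ Red p.2} ?_ ?_ ?_
    · rintro ⟨a, b⟩ h
      dsimp only
      split_ifs with h'
      · by_cases ha : Red a
        · by_cases hb : Red b
          · exact absurd ⟨h'.1, h'.2, ha, hb⟩ h
          · rw [nred b hb, mul_zero]
        · rw [nred a ha, zero_mul]
      · rfl
    · rintro ⟨a, b⟩ ⟨h1, -, ha, hb⟩ ⟨a', b'⟩ ⟨h1', -, ha', hb'⟩ h
      dsimp only at h h1 h1' ha hb ha' hb'
      rw [List.append_assoc, List.append_assoc] at h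
      obtain ⟨e1, e2⟩ := List.append_inj h (by rw [h1, h1'])
      obtain ⟨e3, e4⟩ := List.append_inj e2 (by rw [(hv a b ha hb).1, (hv a' b' ha' hb').1])
      rw [e1, e4]
    · rintro ⟨a, b⟩ ⟨h1, h2, ha, hb⟩
      dsimp only at h1 h2 ha hb ⊢
      rw [if_pos ⟨h1, h2⟩, hcl a b ha hb, h2, mul_inv_cancel_left, if_pos rfl]
      exact hw a b ha hb
  · rw [Gr, Gr, ← ENNReal.tsum_mul_left, ← ENNReal.tsum_mul_right]
    by_cases hb : Red b
    · refine tsum_le_of_injOn _ _ (fun a => a ++ v a b ++ b) {a | cls N a = y ∧ Red a} ?_ ?_ ?_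
      · intro a h
        split_ifs with h'
        · rw [nred a (fun ha => h ⟨h', ha⟩), zero_mul]
        · rw [zero_mul]
      · rintro a ⟨-, ha⟩ a' ⟨-, ha'⟩ h
        dsimp only at h
        have h := List.append_cancel_right h
        exact (List.append_inj' h (by rw [(hv a b ha hb).1, (hv a' b ha' hb).1])).1
      · rintro a ⟨h1, ha⟩
        rw [if_pos h1, hcl a b ha hb, h1, if_pos rfl]
        exact hw a b ha hb
    · simp [nred b hb]

theorem sym_bound {d : ℕ} (N : Subgroup (FreeGroup (Fin d))) [N.Normal]
    {f : (ℕ → Letter d) → ℝ} {u : ℝ} {K : ℝ≥0∞}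
    (hK : ∀ (n : ℕ) (y : FreeGroup (Fin d) ⧸ N),
        ∑' l : List (Letter d), (if l.length = n then wt f u l * Gr N f u ((cls N l)⁻¹ * y) else 0)
          ≤ K * Gr N f u y) (n M : ℕ) (C : ℝ≥0∞)
    (hs : open Classical in ∀ g : FreeGroup (Fin d) ⧸ N,
      ∑' l : List (Letter d), (if l.length = n ∧ cls N l = g then wt f u l else 0) ≤
      C * ∑' l : List (Letter d), (if cls N l = g⁻¹ ∧ n - M ≤ l.length ∧ l.length ≤ n + M then
        wt f u l else 0)) (x : FreeGroup (Fin d) ⧸ N) :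
    ∑' l : List (Letter d), (if l.length = n then wt f u l * Gr N f u (cls N l * x) else 0) ≤
      (C * ((2 * M + 1 : ℕ) : ℝ≥0∞) * K) * Gr N f u x := by
  classical
  let H := Gr N f u
  calc _ = ∑' l : List (Letter d), ∑' g : FreeGroup (Fin d) ⧸ N,
          (if l.length = n ∧ cls N l = g then wt f u l else 0) * H (g * x) := by
        refine tsum_congr fun l => ?_
        rw [tsum_eq_single (cls N l)]
        · simp [H]
        · intro g hg
          simp [hg.symm]
    _ = ∑' g : FreeGroup (Fin d) ⧸ N,
          (∑' l : List (Letter d), (if l.length = n ∧ cls N l = g then wt f u l else 0)) *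
            H (g * x) := by
        rw [ENNReal.tsum_comm]
        exact tsum_congr fun g => ENNReal.tsum_mul_right
    _ ≤ ∑' g : FreeGroup (Fin d) ⧸ N, C * ((∑' l : List (Letter d),
          (if cls N l = g⁻¹ ∧ n - M ≤ l.length ∧ l.length ≤ n + M then wt f u l else 0)) *
            H (g * x)) := by
        refine ENNReal.tsum_le_tsum fun g => ?_
        rw [← mul_assoc]
        gcongr
        exact hs g
    _ = C * ∑' l : List (Letter d), ∑' g : FreeGroup (Fin d) ⧸ N,
          (if cls N l = g⁻¹ ∧ n - M ≤ l.length ∧ l.length ≤ n + M then wt f u l else 0) *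
            H (g * x) := by
        rw [ENNReal.tsum_mul_left, ENNReal.tsum_comm]
        congr 1
        exact tsum_congr fun g => ENNReal.tsum_mul_right.symm
    _ = C * ∑' l : List (Letter d),
          (if n - M ≤ l.length ∧ l.length ≤ n + M then wt f u l * H ((cls N l)⁻¹ * x) else 0) := by
        congr 1
        refine tsum_congr fun l => ?_
        rw [tsum_eq_single (cls N l)⁻¹]
        · simp
        · intro g hg
          have : cls N l ≠ g⁻¹ := fun h => hg (by rw [h, inv_inv])
          simp [this]
    _ ≤ C * ∑' l : List (Letter d), ∑ m ∈ Finset.Icc (n - M) (n + M),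
          (if l.length = m then wt f u l * H ((cls N l)⁻¹ * x) else 0) := by
        gcongr with l
        rw [Finset.sum_ite_eq]
        simp only [Finset.mem_Icc]
        exact le_rfl
    _ = C * ∑ m ∈ Finset.Icc (n - M) (n + M), ∑' l : List (Letter d),
          (if l.length = m then wt f u l * H ((cls N l)⁻¹ * x) else 0) := by
        rw [Summable.tsum_finsetSum (fun _ _ => ENNReal.summable)]
    _ ≤ C * ∑ m ∈ Finset.Icc (n - M) (n + M), K * H x := by
        gcongr with m hm
        exact hK m x
    _ ≤ C * (((2 * M + 1 : ℕ) : ℝ≥0∞) * (K * H x)) := by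
        rw [Finset.sum_const, nsmul_eq_mul]
        gcongr
        rw [Nat.card_Icc]
        omega
    _ = _ := by ring

theorem Z_bound {d : ℕ} (hd : 2 ≤ d) (N : Subgroup (FreeGroup (Fin d))) [N.Normal]
    (hamen : IsAmenable (FreeGroup (Fin d) ⧸ N))
    (hN : N ≠ ⊥) {f : (ℕ → Letter d) → ℝ} (hf : GeomPot f) {u : ℝ} (hu : 0 ≤ u)
    (hfin : Gr N f u 1 ≠ ∞) :
    ∃ K : ℝ, 0 ≤ K ∧ ∀ (n M : ℕ) (c : ℝ), 0 ≤ c →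
    (open Classical in ∀ g : FreeGroup (Fin d) ⧸ N,
      ∑' l : List (Letter d), (if l.length = n ∧ cls N l = g then wt f u l else 0) ≤
      ENNReal.ofReal c * ∑' l : List (Letter d),
        (if cls N l = g⁻¹ ∧ n - M ≤ l.length ∧ l.length ≤ n + M then wt f u l else 0)) →
      ∑ l ∈ (List.finite_length_eq (Letter d) n).toFinset, (wt f u l).toReal ≤
        c * (2 * M + 1) * K + K := by
  classical
  obtain ⟨K, hK, h1, h2⟩ := glue_bounds hd N hN hf hu
  have hfin' : ∀ y, Gr N f u y ≠ ∞ := by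
    intro y
    obtain ⟨b, hb, hy⟩ := cls_surj N y⁻¹
    have := h2 b y
    rw [hy, mul_inv_cancel] at this
    intro htop
    rw [htop, ENNReal.top_mul (wt_pos f u hb), top_le_iff] at this
    exact ENNReal.mul_ne_top hK hfin this
  refine ⟨K.toReal, ENNReal.toReal_nonneg, fun n M c hc hs => ?_⟩
  have h3 := sym_bound N h1 n M _ hs
  have conv : ∀ (a : List (Letter d) → FreeGroup (Fin d) ⧸ N) (K' : ℝ≥0∞), K' ≠ ∞ → ∀ x,
      ∑' l : List (Letter d), (if l.length = n then wt f u l * Gr N f u (a l * x) else 0) ≤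
        K' * Gr N f u x →
      ∑ l ∈ (List.finite_length_eq (Letter d) n).toFinset,
        (wt f u l).toReal * (Gr N f u (a l * x)).toReal ≤ K'.toReal * (Gr N f u x).toReal := by
    intro a K' hK' x h
    have : ∑ l ∈ (List.finite_length_eq (Letter d) n).toFinset,
        wt f u l * Gr N f u (a l * x) ≤ K' * Gr N f u x := by
      refine le_trans ?_ h
      refine le_trans (le_of_eq ?_)
        (ENNReal.sum_le_tsum (List.finite_length_eq (Letter d) n).toFinset)
      refine Finset.sum_congr rfl fun l hl => ?_
      rw [if_pos]
      simpa using hl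
    have := ENNReal.toReal_mono (ENNReal.mul_ne_top hK' (hfin' x)) this
    rw [ENNReal.toReal_sum (fun l _ => ENNReal.mul_ne_top (wt_ne_top _ _ _) (hfin' _))] at this
    simpa only [ENNReal.toReal_mul] using this
  have := mean_bound hamen (List.finite_length_eq (Letter d) n).toFinset (cls N)
    (fun l => (wt f u l).toReal) (fun l => ENNReal.toReal_nonneg) (fun y => (Gr N f u y).toReal)
    (fun y => ENNReal.toReal_pos (Gr_pos N f u y) (hfin' y)) _ _
    (fun x => conv (cls N) _ (by finiteness) x (h3 x))
    (fun x => conv (fun l => (cls N l)⁻¹) _ hK x (h1 n x))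
  refine this.trans (le_of_eq ?_)
  rw [ENNReal.toReal_mul, ENNReal.toReal_mul, ENNReal.toReal_ofReal hc, ENNReal.toReal_natCast]
  push_cast
  ring

/-! ### Conclusion -/

theorem growth_summable {z c : ℕ → ℝ} {M : ℕ → ℕ} {K : ℝ} (hz : ∀ n, 0 ≤ z n) (hK : 0 ≤ K)
    (hc : ∀ n, 0 < c n)
    (hc1 : Filter.Tendsto (fun n : ℕ => c n ^ ((n : ℝ)⁻¹)) Filter.atTop (nhds 1))
    (hM : Filter.Tendsto (fun n : ℕ => (M n : ℝ) / n) Filter.atTop (nhds 0)) (n₀ : ℕ)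
    (hb : ∀ n, n₀ ≤ n → z n ≤ c n * (2 * M n + 1) * K + K) {t : ℝ} (ht : 0 < t) :
    Summable fun n => z n * Real.exp (-(2 * t)) ^ n := by
  have hq : 1 < Real.exp t := Real.one_lt_exp_iff.2 ht
  have hr0 : 0 ≤ Real.exp (-t) := (Real.exp_pos _).le
  have hr1 : Real.exp (-t) < 1 := by simpa using ht
  have s1 : Summable fun n : ℕ => (n : ℝ) ^ 1 * Real.exp (-t) ^ n :=
    summable_pow_mul_geometric_of_norm_lt_one 1 (by simpa using ht)
  have s2 : Summable fun n : ℕ => Real.exp (-t) ^ n := summable_geometric_of_lt_one hr0 hr1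
  have s3 : Summable fun n : ℕ =>
      K * (2 * ((n : ℝ) ^ 1 * Real.exp (-t) ^ n) + Real.exp (-t) ^ n) + K * Real.exp (-t) ^ n :=
    (((s1.mul_left 2).add s2).mul_left K).add (s2.mul_left K)
  refine Summable.of_norm_bounded_eventually_nat s3 ?_
  filter_upwards [hc1.eventually_lt_const hq, hM.eventually_lt_const one_pos,
    Filter.eventually_ge_atTop n₀, Filter.eventually_ge_atTop 1] with n h1 h2 h3 h4
  have hn : (0 : ℝ) < n := by exact_mod_cast h4
  have hMn : (M n : ℝ) ≤ n := by
    rw [div_lt_one hn] at h2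
    exact h2.le
  have hcn : c n ≤ Real.exp t ^ n := by
    rw [← Real.rpow_inv_natCast_pow (hc n).le (show n ≠ 0 by omega)]
    exact pow_le_pow_left₀ (Real.rpow_nonneg (hc n).le _) h1.le n
  have e1 : Real.exp t ^ n * Real.exp (-(2 * t)) ^ n = Real.exp (-t) ^ n := by
    rw [← mul_pow, ← Real.exp_add]
    congr 2
    ring
  have e2 : Real.exp (-(2 * t)) ^ n ≤ Real.exp (-t) ^ n :=
    pow_le_pow_left₀ (Real.exp_pos _).le (Real.exp_le_exp.2 (by linarith)) n
  have hp : 0 < Real.exp (-(2 * t)) ^ n := pow_pos (Real.exp_pos _) n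
  rw [Real.norm_of_nonneg (mul_nonneg (hz n) hp.le)]
  have hA : c n * (2 * M n + 1) ≤ Real.exp t ^ n * (2 * n + 1) := by
    gcongr
  calc z n * Real.exp (-(2 * t)) ^ n
      ≤ (Real.exp t ^ n * (2 * n + 1) * K + K) * Real.exp (-(2 * t)) ^ n := by
        refine mul_le_mul_of_nonneg_right ((hb n h3).trans ?_) hp.le
        gcongr
    _ = K * (2 * n + 1) * (Real.exp t ^ n * Real.exp (-(2 * t)) ^ n)
          + K * Real.exp (-(2 * t)) ^ n := by ring
    _ ≤ K * (2 * n + 1) * Real.exp (-t) ^ n + K * Real.exp (-t) ^ n := by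
        rw [e1]
        gcongr
    _ = _ := by ring

theorem conv_tsum {d : ℕ} (f : (ℕ → Letter d) → ℝ) (u : ℝ) (P : List (Letter d) → Prop)
    [DecidablePred P] (hP : ∀ l, P l → Red l) (B : ℕ) (hB : ∀ l, P l → l.length ≤ B) :
    ENNReal.ofReal (∑' l : {l : List (Letter d) // P l}, Real.exp (u * Sw f l.val)) =
      ∑' l, if P l then wt f u l else 0 := by
  have : Finite {l : List (Letter d) // P l} :=
    ((List.finite_length_le (Letter d) B).subset (fun l hl => hB l hl)).to_subtype
  rw [ENNReal.ofReal_tsum_of_nonneg (fun _ => (Real.exp_pos _).le) Summable.of_finite]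
  have e := tsum_subtype {l : List (Letter d) | P l} (wt f u)
  have e2 : ∀ l : {l : List (Letter d) // P l},
      ENNReal.ofReal (Real.exp (u * Sw f l.val)) = wt f u l.val :=
    fun l => (wt_of_red f u (hP _ l.2)).symm
  rw [tsum_congr e2]
  refine Eq.trans e (tsum_congr fun l => ?_)
  simp [Set.indicator_apply]

theorem upper {d : ℕ} (hd : 2 ≤ d)
    (ζ : (ℕ → Letter d) → ℝ) (hζ : GeomPot ζ)
    (N : Subgroup (FreeGroup (Fin d))) [N.Normal] (hN : N ≠ ⊥)
    (hamen : IsAmenable (FreeGroup (Fin d) ⧸ N))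
    (hsym : AsympSymm N ζ) {u u' : ℝ} (hu : 0 ≤ u) (huu : u < u')
    (hsum : Summable fun x : N => Real.exp (u * Sx ζ (x : FreeGroup (Fin d)))) :
    Summable fun x : FreeGroup (Fin d) => Real.exp (u' * Sx ζ x) := by
  classical
  have hfin : Gr N ζ u 1 ≠ ∞ := by
    have h1 : ∑' x : N, ENNReal.ofReal (Real.exp (u * Sx ζ (x : FreeGroup (Fin d)))) ≠ ∞ :=
      hsum.tsum_ofReal_ne_top
    have e := tsum_subtype (N : Set (FreeGroup (Fin d)))
      (fun x => ENNReal.ofReal (Real.exp (u * Sx ζ x)))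
    have h2 : ∑' x : FreeGroup (Fin d), (N : Set (FreeGroup (Fin d))).indicator
        (fun x => ENNReal.ofReal (Real.exp (u * Sx ζ x))) x ≠ ∞ := by
      rw [← e]
      exact h1
    refine ne_top_of_le_ne_top h2 ?_
    refine tsum_le_of_injOn _ _ prodL {l | Red l ∧ cls N l = 1} ?_ ?_ ?_
    · intro l hl
      split_ifs with h
      · have : ¬ Red l := fun h' => hl ⟨h', h⟩
        simp [wt, this]
      · rfl
    · rintro l ⟨h, -⟩ l' ⟨h', -⟩ hh
      rw [← toWord_prodL h, hh, toWord_prodL h']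
    · rintro l ⟨h, h'⟩
      have hm : prodL l ∈ (N : Set (FreeGroup (Fin d))) := (QuotientGroup.eq_one_iff _).1 h'
      rw [if_pos h', Set.indicator_of_mem hm, wt_of_red _ _ h, Sx, toWord_prodL h]
  obtain ⟨K, hK, hZ⟩ := Z_bound hd N hamen hN hζ hu hfin
  obtain ⟨n₀, c, M, hc, hc1, hM, hs⟩ := hsym u
  have hb : ∀ n, n₀ ≤ n → ∑ l ∈ (List.finite_length_eq (Letter d) n).toFinset,
      (wt ζ u l).toReal ≤ c n * (2 * M n + 1) * K + K := by
    intro n hn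
    refine hZ n (M n) (c n) (hc n).le fun g => ?_
    obtain ⟨x, rfl⟩ := QuotientGroup.mk_surjective g
    have := ENNReal.ofReal_le_ofReal (hs x n hn)
    rw [ENNReal.ofReal_mul (hc n).le,
      conv_tsum ζ u (fun l => l.length = n ∧ Red l ∧ prodL l * x⁻¹ ∈ N) (fun l h => h.2.1) n
        (fun l h => h.1.le),
      conv_tsum ζ u (fun l => Red l ∧ prodL l * x ∈ N ∧ n - M n ≤ l.length ∧ l.length ≤ n + M n)
        (fun l h => h.1) (n + M n) (fun l h => h.2.2.2)] at this
    refine le_trans (le_of_eq ?_) (this.trans (le_of_eq ?_))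
    · refine tsum_congr fun l => ?_
      by_cases hl : Red l
      · simp only [cls, hl, true_and, ← QuotientGroup.eq_one_iff, QuotientGroup.mk_mul,
          QuotientGroup.mk_inv, mul_inv_eq_one]
        congr
      · simp [wt, hl]
    · congr 1
      refine tsum_congr fun l => ?_
      by_cases hl : Red l
      · simp only [cls, hl, true_and, ← QuotientGroup.eq_one_iff, QuotientGroup.mk_mul,
          mul_eq_one_iff_eq_inv]
        congr
      · simp [wt, hl]
  obtain ⟨-, s, hs0, hs1, hsb⟩ := hζ
  have hlog : Real.log s < 0 := Real.log_neg hs0 hs1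
  obtain ⟨t, ht⟩ : ∃ t, t = -((u' - u) * Real.log s) / 2 := ⟨_, rfl⟩
  have ht0 : 0 < t := by
    rw [ht]
    have : (u' - u) * Real.log s < 0 := mul_neg_of_pos_of_neg (by linarith) hlog
    linarith
  have hsm := growth_summable
    (fun n => Finset.sum_nonneg fun l _ => ENNReal.toReal_nonneg) hK hc hc1 hM n₀ hb ht0
  have hwt : ∀ l : List (Letter d),
      wt ζ u' l ≤ wt ζ u l * ENNReal.ofReal (Real.exp (-(2 * t)) ^ l.length) := by
    intro l
    by_cases hl : Red l
    · rw [wt_of_red _ _ hl, wt_of_red _ _ hl, ← ENNReal.ofReal_mul (Real.exp_pos _).le,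
        ← Real.exp_nat_mul, ← Real.exp_add]
      apply ENNReal.ofReal_le_ofReal
      apply Real.exp_le_exp.2
      have h1 := Sw_le hd hsb hl
      have h2 := mul_le_mul_of_nonneg_left h1 (show 0 ≤ u' - u by linarith)
      rw [ht]
      linarith
    · simp [wt, hl]
  have hall : ∑' l : List (Letter d), wt ζ u' l ≠ ∞ := by
    refine ne_top_of_le_ne_top hsm.tsum_ofReal_ne_top ?_
    calc ∑' l : List (Letter d), wt ζ u' l
        ≤ ∑' l : List (Letter d), ∑' n : ℕ, if l.length = n then
            wt ζ u l * ENNReal.ofReal (Real.exp (-(2 * t)) ^ n) else 0 := by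
          refine ENNReal.tsum_le_tsum fun l => (hwt l).trans (le_of_eq ?_)
          rw [tsum_eq_single l.length]
          · simp
          · intro n hn
            simp [hn.symm]
      _ = ∑' n : ℕ, ∑' l : List (Letter d), if l.length = n then
            wt ζ u l * ENNReal.ofReal (Real.exp (-(2 * t)) ^ n) else 0 := ENNReal.tsum_comm
      _ ≤ _ := by
          refine ENNReal.tsum_le_tsum fun n => ?_
          rw [tsum_eq_sum (s := (List.finite_length_eq (Letter d) n).toFinset),
            ENNReal.ofReal_mul (Finset.sum_nonneg fun l _ => ENNReal.toReal_nonneg),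
            ENNReal.ofReal_sum_of_nonneg (fun l _ => ENNReal.toReal_nonneg), Finset.sum_mul]
          · refine Finset.sum_le_sum fun l hl => ?_
            rw [ENNReal.ofReal_toReal (wt_ne_top _ _ _)]
            split_ifs <;> simp
          · intro l hl
            rw [if_neg]
            simpa using hl
  have hF : ∑' x : FreeGroup (Fin d), ENNReal.ofReal (Real.exp (u' * Sx ζ x)) ≠ ∞ := by
    refine ne_top_of_le_ne_top hall ?_
    refine tsum_le_of_injOn _ _ FreeGroup.toWord Set.univ (fun a h => absurd trivial h)
      FreeGroup.toWord_injective.injOn fun x _ => ?_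
    rw [wt_of_red _ _ (red_toWord x), Sx]
  have := ENNReal.summable_toReal hF
  simpa only [ENNReal.toReal_ofReal (Real.exp_pos _).le] using this

theorem pos_of_summable {d : ℕ} (hd : 2 ≤ d)
    (ζ : (ℕ → Letter d) → ℝ) (hζ : GeomPot ζ)
    (N : Subgroup (FreeGroup (Fin d))) (hN : N ≠ ⊥) {u : ℝ}
    (hsum : Summable fun x : N => Real.exp (u * Sx ζ (x : FreeGroup (Fin d)))) : 0 ≤ u := by
  by_contra hu
  push Not at hu
  obtain ⟨-, s, hs0, hs1, hsb⟩ := hζ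
  obtain ⟨t, htN, ht1⟩ := N.bot_or_exists_ne_one.resolve_left hN
  have : Infinite N := by
    refine Infinite.of_injective (fun n : ℕ => (⟨t ^ n, N.pow_mem htN n⟩ : N)) ?_
    intro m n h
    exact injective_pow_iff_not_isOfFinOrder.2 (not_isOfFinOrder_of_isMulTorsionFree ht1)
      (congrArg Subtype.val h)
  have h1 : Summable fun _ : N => (1 : ℝ) := by
    refine Summable.of_nonneg_of_le (fun _ => zero_le_one) (fun x => ?_) hsum
    apply Real.one_le_exp
    have := Sw_le hd hsb (red_toWord (x : FreeGroup (Fin d)))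
    have h2 : ((x : FreeGroup (Fin d)).toWord.length : ℝ) * Real.log s ≤ 0 :=
      mul_nonpos_of_nonneg_of_nonpos (Nat.cast_nonneg _) (Real.log_neg hs0 hs1).le
    exact mul_nonneg_of_nonpos_of_nonpos hu.le (this.trans h2)
  rw [summable_const_iff] at h1
  exact one_ne_zero h1

/- STATEMENT 18: If F_d/N is amenable and (N, Φ) is asymptotically symmetric, then the
exponents of convergence coincide: δ_N = δ. -/
theorem stmt18 (d : ℕ) (hd : 2 ≤ d)
    (ζ : (ℕ → Letter d) → ℝ) (hζ : GeomPot ζ)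
    (N : Subgroup (FreeGroup (Fin d))) [N.Normal] (hN : N ≠ ⊥)
    (hamen : IsAmenable (FreeGroup (Fin d) ⧸ N))
    (hsym : AsympSymm N ζ) :
    sInf {u : ℝ | Summable fun x : N => Real.exp (u * Sx ζ (x : FreeGroup (Fin d)))} =
      sInf {u : ℝ | Summable fun x : FreeGroup (Fin d) => Real.exp (u * Sx ζ x)} := by
  have hsub : ∀ u : ℝ, (Summable fun x : FreeGroup (Fin d) => Real.exp (u * Sx ζ x)) →
      Summable fun x : N => Real.exp (u * Sx ζ (x : FreeGroup (Fin d))) :=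
    fun u h => h.comp_injective Subtype.val_injective
  have hup : ∀ u u' : ℝ, u < u' →
      (Summable fun x : N => Real.exp (u * Sx ζ (x : FreeGroup (Fin d)))) →
      Summable fun x : FreeGroup (Fin d) => Real.exp (u' * Sx ζ x) := fun u u' huu h =>
    upper hd ζ hζ N hN hamen hsym (pos_of_summable hd ζ hζ N hN h) huu h
  have hbdd : BddBelow {u : ℝ | Summable fun x : N =>
      Real.exp (u * Sx ζ (x : FreeGroup (Fin d)))} :=
    ⟨0, fun u h => pos_of_summable hd ζ hζ N hN h⟩
  rcases Set.eq_empty_or_nonempty {u : ℝ | Summable fun x : N =>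
      Real.exp (u * Sx ζ (x : FreeGroup (Fin d)))} with h | ⟨u₀, hu₀⟩
  · have h' : {u : ℝ | Summable fun x : FreeGroup (Fin d) => Real.exp (u * Sx ζ x)} = ∅ :=
      Set.subset_empty_iff.1 (h ▸ hsub)
    rw [h, h']
  · have hbdd' : BddBelow {u : ℝ | Summable fun x : FreeGroup (Fin d) => Real.exp (u * Sx ζ x)} :=
      hbdd.mono hsub
    apply le_antisymm
    · exact csInf_le_csInf hbdd ⟨u₀ + 1, hup u₀ _ (by linarith) hu₀⟩ hsub
    · refine le_csInf ⟨u₀, hu₀⟩ fun u hu => ?_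
      exact le_of_forall_gt_imp_ge_of_dense fun u' huu => csInf_le hbdd' (hup u u' huu hu)

end Stmt18
end
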